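/- Let Ω ⊂ ℝ^N (N ≥ 3) be a bounded open set with C² boundary and suppose Φ, Φ₀, G, K, W := Φ/Φ₀ satisfy all of the hypotheses (H1)–(H7) listed in the context. Let τ be a positive Borel measure on Ω with ∫_Ω Φ dτ < ∞, let ν be a finite positive Borel measure on ∂Ω, and let u : Ω → [0,∞] be given by u(x) = ∫_Ω G(x,y) dτ(y) + ∫_{∂Ω} K(x,y) dν(y). Then there exists C ≥ 1, independent of u, τ, ν, such that C⁻¹ (∫_Ω Φ dτ + ν(∂Ω)) ≤ ∫_Ω W(x) u(x) dx ≤ C (∫_Ω Φ dτ + ν(∂Ω)). -/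

import Mathlib

open MeasureTheory Metric Set ENNReal

/-- `Ω` has `C²` boundary: near each boundary point, `Ω` coincides with the strict
sublevel set of a `C²` function with nonvanishing derivative. -/
def HasC2Boundary {N : ℕ} (Ω : Set (EuclideanSpace ℝ (Fin N))) : Prop :=
  ∀ p ∈ frontier Ω, ∃ (U : Set (EuclideanSpace ℝ (Fin N)))
    (f : EuclideanSpace ℝ (Fin N) → ℝ),
    IsOpen U ∧ p ∈ U ∧ ContDiffOn ℝ 2 f U ∧ (∀ x ∈ U, fderiv ℝ f x ≠ 0) ∧
    Ω ∩ U = {x ∈ U | f x < 0}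

/-!
By Tonelli's theorem the estimate reduces to two kernel bounds, uniform in `y`: the integral of
`W G(·, y)` over `Ω` is comparable to `Φ y` for `y ∈ Ω`, and the integral of `W K(·, y)` is
comparable to `1` for `y ∈ ∂Ω`. In both, `W` may be replaced by `Φ / δ`, where `δ` is the distance
to `∂Ω`.

For the Martin kernel, the slice bounds on the parallel surfaces `Σ_β` are integrated in `β`, and
compactness handles the rest of `Ω`. The coarea formula for `δ` is needed only up to a constant,
and it follows from Fubini's theorem in local bi-Lipschitz coordinates consisting of the orthogonal
projection along a direction pointing into `Ω`, and `δ` itself.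

For the Green kernel, the lower bound comes from a ball of fixed radius all of whose points `x`
satisfy `|x - y| < 2 δ(x)`. The upper bound splits at `|x - y| = a δ(x)`: the near part is
controlled by the Riesz kernel `|x - y|^(1 - N)` and the far part by
`δ(x)^(2α* - 1) |x - y|^(2 - N - 2α)`, which is integrable in the coordinates above, uniformly in
`y`, because `α - 1/2 < α*`.
-/

open scoped NNReal
open Module (finrank)

local notation "δ[" Ω "](" x ")" => infDist x (frontier Ω)

/-- The relation `a ∼ b` of potential theory with its constant made explicit: each of the two
quantities is at most `C` times the other. A constant in `ℝ≥0` is automatically finite. -/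
def ComparableUpTo (C : ℝ≥0) (a b : ℝ≥0∞) : Prop :=
  a ≤ C * b ∧ b ≤ C * a

namespace ComparableUpTo

variable {C C' : ℝ≥0} {a b c d : ℝ≥0∞}

theorem symm (h : ComparableUpTo C a b) : ComparableUpTo C b a :=
  And.symm h

theorem trans (h : ComparableUpTo C a b) (h' : ComparableUpTo C' b c) :
    ComparableUpTo (C * C') a c := by
  constructor
  · calc a ≤ C * (C' * c) := h.1.trans (by gcongr; exact h'.1)
      _ = ↑(C * C') * c := by push_cast; ring
  · calc c ≤ C' * (C * a) := h'.2.trans (by gcongr; exact h.2)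
      _ = ↑(C * C') * a := by push_cast; ring

theorem mono (hC : C ≤ C') (h : ComparableUpTo C a b) : ComparableUpTo C' a b :=
  ⟨h.1.trans (by gcongr), h.2.trans (by gcongr)⟩

theorem mul_right (h : ComparableUpTo C a b) (c : ℝ≥0∞) : ComparableUpTo C (a * c) (b * c) := by
  unfold ComparableUpTo
  rw [← mul_assoc, ← mul_assoc]
  exact ⟨mul_le_mul_left h.1 c, mul_le_mul_left h.2 c⟩

theorem add (h : ComparableUpTo C a b) (h' : ComparableUpTo C c d) :
    ComparableUpTo C (a + c) (b + d) := by
  unfold ComparableUpTo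
  rw [mul_add, mul_add]
  exact ⟨add_le_add h.1 h'.1, add_le_add h.2 h'.2⟩

theorem sum {ι : Type*} {s : Finset ι} {a b : ι → ℝ≥0∞}
    (h : ∀ i ∈ s, ComparableUpTo C (a i) (b i)) :
    ComparableUpTo C (∑ i ∈ s, a i) (∑ i ∈ s, b i) := by
  unfold ComparableUpTo
  rw [Finset.mul_sum, Finset.mul_sum]
  exact ⟨Finset.sum_le_sum fun i hi ↦ (h i hi).1, Finset.sum_le_sum fun i hi ↦ (h i hi).2⟩

theorem ofReal {c x y : ℝ} (hc : 0 ≤ c) (hxy : x ≤ c * y) (hyx : y ≤ c * x) :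
    ComparableUpTo c.toNNReal (ENNReal.ofReal x) (ENNReal.ofReal y) := by
  change _ ≤ ENNReal.ofReal c * _ ∧ _ ≤ ENNReal.ofReal c * _
  rw [← ENNReal.ofReal_mul hc, ← ENNReal.ofReal_mul hc]
  exact ⟨ENNReal.ofReal_le_ofReal hxy, ENNReal.ofReal_le_ofReal hyx⟩

theorem ofReal_div {c p q d : ℝ} (hc : 0 < c) (hd : 0 < d) (hp : 0 ≤ p) (hdq : c⁻¹ * d ≤ q)
    (hqd : q ≤ c * d) :
    ComparableUpTo c.toNNReal (ENNReal.ofReal (p / q)) (ENNReal.ofReal (p / d)) := by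
  have hq : 0 < q := lt_of_lt_of_le (by positivity) hdq
  refine ofReal hc.le ?_ ?_
  · calc p / q ≤ p / (c⁻¹ * d) := by gcongr
      _ = c * (p / d) := by field_simp
  · calc p / d = c * (p / (c * d)) := by field_simp
      _ ≤ c * (p / q) := by gcongr

theorem one_right_of_bounds {c : ℝ} (hc : 0 < c) (hl : ENNReal.ofReal c⁻¹ ≤ a)
    (hu : a ≤ ENNReal.ofReal c) : ComparableUpTo c.toNNReal a 1 := by
  change a ≤ ENNReal.ofReal c * 1 ∧ 1 ≤ ENNReal.ofReal c * a
  refine ⟨by rwa [mul_one], ?_⟩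
  rw [ENNReal.ofReal_inv_of_pos hc] at hl
  calc 1 = ENNReal.ofReal c * (ENNReal.ofReal c)⁻¹ :=
        (ENNReal.mul_inv_cancel (by simpa using hc) ENNReal.ofReal_ne_top).symm
    _ ≤ ENNReal.ofReal c * a := by gcongr

theorem ofReal_bounds (h : ComparableUpTo C a b) :
    ENNReal.ofReal ((max 1 C : ℝ≥0) : ℝ)⁻¹ * b ≤ a ∧
      a ≤ ENNReal.ofReal ((max 1 C : ℝ≥0) : ℝ) * b := by
  obtain ⟨hab, hba⟩ := h.mono (le_max_right 1 C)
  rw [ENNReal.ofReal_inv_of_pos (by positivity), ENNReal.ofReal_coe_nnreal]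
  exact ⟨(ENNReal.inv_mul_le_iff (by simp) ENNReal.coe_ne_top).2 hba, hab⟩

section Integral

variable {X Y : Type*} [MeasurableSpace X] [MeasurableSpace Y] {μ : Measure X} {ν : Measure Y}

theorem lintegral {f g : X → ℝ≥0∞} (h : ∀ᵐ x ∂μ, ComparableUpTo C (f x) (g x)) :
    ComparableUpTo C (∫⁻ x, f x ∂μ) (∫⁻ x, g x ∂μ) := by
  unfold ComparableUpTo
  rw [← lintegral_const_mul' _ _ ENNReal.coe_ne_top, ← lintegral_const_mul' _ _ ENNReal.coe_ne_top]
  exact ⟨lintegral_mono_ae (h.mono fun x hx ↦ hx.1), lintegral_mono_ae (h.mono fun x hx ↦ hx.2)⟩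

theorem setLIntegral {s : Set X} (hs : MeasurableSet s) {f g : X → ℝ≥0∞}
    (h : ∀ x ∈ s, ComparableUpTo C (f x) (g x)) :
    ComparableUpTo C (∫⁻ x in s, f x ∂μ) (∫⁻ x in s, g x ∂μ) :=
  lintegral ((ae_restrict_iff' hs).2 (.of_forall h))

theorem lintegral_mul_lintegral [SFinite μ] [SFinite ν] {w : X → ℝ≥0∞} {k : X → Y → ℝ≥0∞}
    (hw : AEMeasurable w μ) (hwt : ∀ x, w x ≠ ⊤)
    (hk : AEMeasurable (Function.uncurry k) (μ.prod ν)) {φ : Y → ℝ≥0∞}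
    (h : ∀ᵐ y ∂ν, ComparableUpTo C (∫⁻ x, w x * k x y ∂μ) (φ y)) :
    ComparableUpTo C (∫⁻ x, w x * ∫⁻ y, k x y ∂ν ∂μ) (∫⁻ y, φ y ∂ν) := by
  simp only [← lintegral_const_mul' _ _ (hwt _)]
  rw [lintegral_lintegral_swap (hw.comp_fst.mul hk)]
  exact lintegral h

theorem lintegral_mul_add_lintegral {Z : Type*} [MeasurableSpace Z] {σ : Measure Z} [SFinite μ]
    [SFinite ν] [SFinite σ] {w : X → ℝ≥0∞} {g : X → Y → ℝ≥0∞} {k : X → Z → ℝ≥0∞}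
    (hw : AEMeasurable w μ) (hwt : ∀ x, w x ≠ ⊤)
    (hg : AEMeasurable (Function.uncurry g) (μ.prod ν))
    (hk : AEMeasurable (Function.uncurry k) (μ.prod σ)) {φ : Y → ℝ≥0∞} {ψ : Z → ℝ≥0∞}
    (hφ : ∀ᵐ y ∂ν, ComparableUpTo C (∫⁻ x, w x * g x y ∂μ) (φ y))
    (hψ : ∀ᵐ z ∂σ, ComparableUpTo C' (∫⁻ x, w x * k x z ∂μ) (ψ z)) :
    ComparableUpTo (max C C') (∫⁻ x, w x * (∫⁻ y, g x y ∂ν + ∫⁻ z, k x z ∂σ) ∂μ)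
      (∫⁻ y, φ y ∂ν + ∫⁻ z, ψ z ∂σ) := by
  have hwg : AEMeasurable (fun x ↦ w x * ∫⁻ y, g x y ∂ν) μ := hw.mul hg.lintegral_prod_right'
  simp only [mul_add]
  rw [lintegral_add_left' hwg]
  exact ((lintegral_mul_lintegral hw hwt hg hφ).mono (le_max_left _ _)).add
    ((lintegral_mul_lintegral hw hwt hk hψ).mono (le_max_right _ _))

theorem setLIntegral_finset_cover {ι : Type*} (t : Finset ι) {S : Set X} {B : ι → Set X}
    (hcover : S ⊆ ⋃ i ∈ t, B i) (f : X → ℝ≥0∞) :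
    ComparableUpTo (1 + t.card) (∫⁻ x in S, f x ∂μ) (∑ i ∈ t, ∫⁻ x in S ∩ B i, f x ∂μ) := by
  constructor
  · calc ∫⁻ x in S, f x ∂μ ≤ ∫⁻ x in ⋃ i ∈ t, S ∩ B i, f x ∂μ := by
          rw [← inter_iUnion₂]
          exact lintegral_mono_set (subset_inter subset_rfl hcover)
      _ ≤ ∑ i ∈ t, ∫⁻ x in S ∩ B i, f x ∂μ := by
          rw [← iUnion_subtype (· ∈ t) fun i ↦ S ∩ B i, ← Finset.sum_coe_sort]
          exact (lintegral_iUnion_le _ _).trans_eq (tsum_fintype _)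
      _ ≤ _ := le_mul_of_one_le_left' (by simp)
  · calc ∑ i ∈ t, ∫⁻ x in S ∩ B i, f x ∂μ ≤ t.card • ∫⁻ x in S, f x ∂μ :=
          Finset.sum_le_card_nsmul _ _ _ fun i _ ↦ lintegral_mono_set inter_subset_left
      _ ≤ _ := by rw [nsmul_eq_mul]; push_cast; gcongr; exact le_add_self

end Integral

end ComparableUpTo

theorem sFinite_of_lintegral_ne_top {X : Type*} [MeasurableSpace X] {μ : Measure X}
    {f : X → ℝ≥0∞} (hf : AEMeasurable f μ) (hf0 : ∀ᵐ x ∂μ, f x ≠ 0) (hft : ∀ᵐ x ∂μ, f x ≠ ⊤)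
    (h : ∫⁻ x, f x ∂μ ≠ ⊤) : SFinite μ := by
  have := isFiniteMeasure_withDensity h
  rw [← withDensity_inv_same₀ hf hf0 hft]
  infer_instance

theorem sFinite_restrict_of_setLIntegral_ofReal_ne_top {X : Type*} [MeasurableSpace X]
    {μ : Measure X} {s : Set X} (hs : MeasurableSet s) {f : X → ℝ}
    (hf : AEMeasurable f (μ.restrict s)) (hpos : ∀ x ∈ s, 0 < f x)
    (h : ∫⁻ x in s, ENNReal.ofReal (f x) ∂μ ≠ ⊤) : SFinite (μ.restrict s) :=
  sFinite_of_lintegral_ne_top hf.ennreal_ofReal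
    ((ae_restrict_iff' hs).2 (.of_forall fun x hx ↦ by simpa using hpos x hx))
    (.of_forall fun _ ↦ ENNReal.ofReal_ne_top) h

section ChangeOfVariables

theorem exists_lipschitzWith_leftInvOn {X Y : Type*} [NormedAddCommGroup X] [NormedSpace ℝ X]
    [FiniteDimensional ℝ X] [PseudoMetricSpace Y] {F : X → Y} {B : Set X} {K : ℝ≥0}
    (hF : AntilipschitzWith K (B.domRestrict F)) :
    ∃ (K' : ℝ≥0) (L : Y → X), LipschitzWith K' L ∧ LeftInvOn L F B := by
  have hinj : InjOn F B := injOn_iff_injective.2 hF.injective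
  have hinv : LipschitzOnWith K (Function.invFunOn F B) (F '' B) := by
    rintro _ ⟨x, hx, rfl⟩ _ ⟨x', hx', rfl⟩
    rw [hinj.leftInvOn_invFunOn hx, hinj.leftInvOn_invFunOn hx']
    exact hF ⟨x, hx⟩ ⟨x', hx'⟩
  obtain ⟨L, hL, hLeq⟩ := hinv.extend_finite_dimension
  exact ⟨_, L, hL, fun x hx ↦
    (hLeq (mem_image_of_mem F hx)).symm.trans (hinj.leftInvOn_invFunOn hx)⟩

theorem comparableUpTo_lintegral_hausdorffMeasure_image {X Y : Type*} [EMetricSpace X]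
    [MeasurableSpace X] [BorelSpace X] [EMetricSpace Y] [MeasurableSpace Y] [BorelSpace Y]
    {F : X → Y} {L : Y → X} {B : Set X} {K : ℝ≥0} (hF : LipschitzWith K F)
    (hL : LipschitzWith K L) (hLF : LeftInvOn L F B) {d : ℝ} (hd : 0 ≤ d)
    {f : X → ℝ≥0∞} (hf : Measurable f) :
    ComparableUpTo (K ^ d) (∫⁻ x in B, f x ∂μH[d]) (∫⁻ y in F '' B, f (L y) ∂μH[d]) := by
  have hLm : Measurable L := hL.continuous.measurable
  have hK : ((K ^ d : ℝ≥0) : ℝ≥0∞) = (K : ℝ≥0∞) ^ d := ENNReal.coe_rpow_of_nonneg _ hd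
  unfold ComparableUpTo
  rw [hK, ← lintegral_map hf hLm, ← smul_eq_mul, ← smul_eq_mul, ← lintegral_smul_measure,
    ← lintegral_smul_measure]
  constructor <;> refine lintegral_mono' (Measure.le_iff.2 fun S hS ↦ ?_) le_rfl <;>
    rw [Measure.smul_apply, Measure.map_apply hLm hS, Measure.restrict_apply hS,
      Measure.restrict_apply (hLm hS)]
  · refine (measure_mono ?_).trans (hL.hausdorffMeasure_image_le hd _)
    rintro x ⟨hxS, hxB⟩
    exact ⟨F x, ⟨by rwa [mem_preimage, hLF hxB], mem_image_of_mem F hxB⟩, hLF hxB⟩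
  · refine (measure_mono ?_).trans (hF.hausdorffMeasure_image_le hd _)
    rintro _ ⟨hxS, x, hxB, rfl⟩
    exact ⟨x, ⟨by rwa [mem_preimage, hLF hxB] at hxS, hxB⟩, rfl⟩

theorem exists_comparableUpTo_setLIntegral_addHaar {G : Type*} [TopologicalSpace G] [AddGroup G]
    [IsTopologicalAddGroup G] [LocallyCompactSpace G] [SecondCountableTopology G]
    [MeasurableSpace G] [BorelSpace G] (μ ν : Measure G) [μ.IsAddHaarMeasure]
    [ν.IsAddHaarMeasure] :
    ∃ C : ℝ≥0, ∀ (s : Set G) (f : G → ℝ≥0∞),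
      ComparableUpTo C (∫⁻ x in s, f x ∂μ) (∫⁻ x in s, f x ∂ν) := by
  suffices key : ∀ (μ ν : Measure G) [μ.IsAddHaarMeasure] [ν.IsAddHaarMeasure],
      ∃ C : ℝ≥0, ∀ (s : Set G) (f : G → ℝ≥0∞), ∫⁻ x in s, f x ∂μ ≤ C * ∫⁻ x in s, f x ∂ν by
    obtain ⟨C, hC⟩ := key μ ν
    obtain ⟨C', hC'⟩ := key ν μ
    exact ⟨max C C', fun s f ↦ ⟨(hC s f).trans (by gcongr; exact le_max_left _ _),
      (hC' s f).trans (by gcongr; exact le_max_right _ _)⟩⟩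
  refine fun μ ν _ _ ↦ ⟨μ.addHaarScalarFactor ν, fun s f ↦ ?_⟩
  conv_lhs => rw [Measure.isAddLeftInvariant_eq_smul μ ν]
  rw [Measure.restrict_smul, lintegral_smul_measure]
  rfl

section Image

variable {X Y : Type*} [NormedAddCommGroup X] [NormedSpace ℝ X] [FiniteDimensional ℝ X]
  [MeasurableSpace X] [BorelSpace X] [NormedAddCommGroup Y] [NormedSpace ℝ Y]
  [FiniteDimensional ℝ Y] [MeasurableSpace Y] [BorelSpace Y] (μ : Measure X) [μ.IsAddHaarMeasure]
  (ν : Measure Y) [ν.IsAddHaarMeasure] {F : X → Y} {L : Y → X} {B : Set X} {K : ℝ≥0}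

theorem exists_comparableUpTo_setLIntegral_image (hXY : finrank ℝ X = finrank ℝ Y)
    (hF : LipschitzWith K F) (hL : LipschitzWith K L) (hLF : LeftInvOn L F B) :
    ∃ C : ℝ≥0, ∀ f : X → ℝ≥0∞, Measurable f →
      ComparableUpTo C (∫⁻ x in B, f x ∂μ) (∫⁻ y in F '' B, f (L y) ∂ν) := by
  have : (μH[(finrank ℝ X : ℝ)] : Measure Y).IsAddHaarMeasure := by rw [hXY]; infer_instance
  obtain ⟨C, hC⟩ := exists_comparableUpTo_setLIntegral_addHaar μ μH[(finrank ℝ X : ℝ)]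
  obtain ⟨C', hC'⟩ := exists_comparableUpTo_setLIntegral_addHaar
    (μH[(finrank ℝ X : ℝ)] : Measure Y) ν
  exact ⟨_, fun f hf ↦ ((hC B f).trans (comparableUpTo_lintegral_hausdorffMeasure_image hF hL hLF
    (Nat.cast_nonneg _) hf)).trans (hC' _ _)⟩

theorem exists_setLIntegral_comp_le_lintegral (hXY : finrank ℝ X = finrank ℝ Y)
    (hF : LipschitzWith K F) (hL : LipschitzWith K L) (hLF : LeftInvOn L F B)
    (hB : MeasurableSet B) :
    ∃ C : ℝ≥0, ∀ φ : Y → ℝ≥0∞, Measurable φ → ∫⁻ x in B, φ (F x) ∂μ ≤ C * ∫⁻ y, φ y ∂ν := by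
  obtain ⟨C, hC⟩ := exists_comparableUpTo_setLIntegral_image μ ν hXY hF hL hLF
  refine ⟨C, fun φ hφ ↦ ?_⟩
  calc ∫⁻ x in B, φ (F x) ∂μ ≤ C * ∫⁻ y in F '' B, φ (F (L y)) ∂ν :=
        (hC _ (hφ.comp hF.continuous.measurable)).1
    _ = C * ∫⁻ y in F '' B, φ y ∂ν := by
        rw [setLIntegral_congr_fun
          (hB.image_of_continuousOn_injOn hF.continuous.continuousOn hLF.injOn)]
        rintro _ ⟨x, hx, rfl⟩
        simp only [hLF hx]
    _ ≤ C * ∫⁻ y, φ y ∂ν := by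
        gcongr 1
        exact setLIntegral_le_lintegral _ _

end Image

/-- The coarea formula for the level sets of `ρ` in `S`, up to the constant `C`: the integral over
`S` against `μ` is comparable to the iterated integral over the slices `{ρ = β}` against `σ`. The
function `g` spares a proof that the slice integrals depend measurably on `β`. -/
def CoareaUpTo {X : Type*} [MeasurableSpace X] (C : ℝ≥0) (μ σ : Measure X) (ρ : X → ℝ)
    (S : Set X) : Prop :=
  ∀ f : X → ℝ≥0∞, Measurable f → ∃ g : ℝ → ℝ≥0∞, Measurable g ∧
    (∀ β, ComparableUpTo C (∫⁻ x in S ∩ ρ ⁻¹' {β}, f x ∂σ) (g β)) ∧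
    ComparableUpTo C (∫⁻ x in S, f x ∂μ) (∫⁻ β, g β)

theorem CoareaUpTo.comparableUpTo_setLIntegral {X : Type*} [MeasurableSpace X] {C C' : ℝ≥0}
    {μ σ : Measure X} {ρ : X → ℝ} {S : Set X} (h : CoareaUpTo C μ σ ρ S) {I : Set ℝ}
    (hI : MeasurableSet I) (hSI : MapsTo ρ S I) {f : X → ℝ≥0∞} (hf : Measurable f)
    (hslice : ∀ β ∈ I, ComparableUpTo C' (∫⁻ x in S ∩ ρ ⁻¹' {β}, f x ∂σ) 1) :
    ComparableUpTo (C * (C * C')) (∫⁻ x in S, f x ∂μ) (volume I) := by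
  obtain ⟨g, -, hg, hvol⟩ := h f hf
  have hg0 : ∀ β ∉ I, g β = 0 := fun β hβ ↦ by
    have hempty : S ∩ ρ ⁻¹' {β} = ∅ :=
      eq_empty_of_forall_notMem fun x ⟨hx, hxβ⟩ ↦ hβ (hxβ ▸ hSI hx)
    simpa [hempty] using (hg β).2
  rw [← setLIntegral_eq_of_support_subset fun β hβ ↦ by_contra fun h ↦ hβ (hg0 β h)] at hvol
  have hone : ComparableUpTo (C * C') (∫⁻ β in I, g β) (∫⁻ _ in I, 1) :=
    .setLIntegral hI fun β hβ ↦ (hg β).symm.trans (hslice β hβ)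
  simpa using hvol.trans hone

theorem CoareaUpTo.of_finset_cover {X ι : Type*} [MeasurableSpace X] {μ σ : Measure X}
    {ρ : X → ℝ} {S : Set X} {t : Finset ι} {B : ι → Set X} {C : ι → ℝ≥0}
    (hcover : S ⊆ ⋃ i ∈ t, B i) (h : ∀ i ∈ t, CoareaUpTo (C i) μ σ ρ (S ∩ B i)) :
    CoareaUpTo ((1 + t.card) * ∑ i ∈ t, C i) μ σ ρ S := by
  intro f hf
  choose! g hg hslice hvol using fun i hi ↦ h i hi f hf
  have hC : ∀ i ∈ t, C i ≤ ∑ i ∈ t, C i := fun i hi ↦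
    Finset.single_le_sum (fun _ _ ↦ zero_le) hi
  refine ⟨fun β ↦ ∑ i ∈ t, g i β, Finset.measurable_fun_sum t hg, fun β ↦ ?_, ?_⟩
  · refine (ComparableUpTo.setLIntegral_finset_cover t (inter_subset_left.trans hcover) f).trans
      (.sum fun i hi ↦ ?_)
    rw [inter_right_comm]
    exact (hslice i hi β).mono (hC i hi)
  · rw [lintegral_finsetSum t hg]
    exact (ComparableUpTo.setLIntegral_finset_cover t hcover f).trans
      (.sum fun i hi ↦ (hvol i hi).mono (hC i hi))

theorem exists_coareaUpTo_of_leftInvOn {X V : Type*} [NormedAddCommGroup X] [NormedSpace ℝ X]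
    [FiniteDimensional ℝ X] [MeasurableSpace X] [BorelSpace X] (μ : Measure X)
    [μ.IsAddHaarMeasure] [NormedAddCommGroup V] [NormedSpace ℝ V] [FiniteDimensional ℝ V]
    [MeasurableSpace V] [BorelSpace V] (hXV : finrank ℝ X = finrank ℝ V + 1)
    {P : X → V} {t : X → ℝ} {L : V × ℝ → X} {B : Set X} {K : ℝ≥0}
    (hF : LipschitzWith K fun x ↦ (P x, t x)) (hL : LipschitzWith K L)
    (hLF : LeftInvOn L (fun x ↦ (P x, t x)) B) (hB : MeasurableSet B) :
    ∃ C : ℝ≥0, CoareaUpTo C μ μH[finrank ℝ V] t B := by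
  set F := fun x ↦ (P x, t x) with hFdef
  set d : ℝ := (finrank ℝ V : ℝ)
  have hP : LipschitzWith K P := by
    simpa [hFdef, Function.comp_def] using LipschitzWith.prod_fst.comp hF
  have hLβ (β : ℝ) : LipschitzWith K fun v ↦ L (v, β) := by
    simpa [Function.comp_def] using hL.comp (LipschitzWith.prodMk_right β)
  have hFB : MeasurableSet (F '' B) :=
    hB.image_of_continuousOn_injOn hF.continuous.continuousOn hLF.injOn
  have hslice (β : ℝ) : P '' (B ∩ t ⁻¹' {β}) = (fun v ↦ (v, β)) ⁻¹' (F '' B) := by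
    ext v
    constructor
    · rintro ⟨x, ⟨hx, rfl⟩, rfl⟩
      exact ⟨x, hx, rfl⟩
    · rintro ⟨x, hx, hxv⟩
      exact ⟨x, ⟨hx, congrArg Prod.snd hxv⟩, congrArg Prod.fst hxv⟩
  obtain ⟨C, hC⟩ := exists_comparableUpTo_setLIntegral_image μ
    ((μH[d] : Measure V).prod (volume : Measure ℝ)) (by simp [hXV]) hF hL hLF
  refine ⟨max (K ^ d) C, fun f hf ↦ ?_⟩
  have hfL : Measurable fun q ↦ f (L q) := hf.comp hL.continuous.measurable
  have hm : Measurable ((F '' B).indicator fun q ↦ f (L q)) := hfL.indicator hFB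
  refine ⟨fun β ↦ ∫⁻ v, (F '' B).indicator (fun q ↦ f (L q)) (v, β) ∂μH[d],
    hm.lintegral_prod_left', fun β ↦ ?_, ?_⟩
  · have hg : ∫⁻ v, (F '' B).indicator (fun q ↦ f (L q)) (v, β) ∂μH[d] =
        ∫⁻ v in P '' (B ∩ t ⁻¹' {β}), f (L (v, β)) ∂μH[d] := by
      rw [hslice, ← lintegral_indicator (measurable_prodMk_right hFB)]
      rfl
    beta_reduce
    rw [hg]
    refine (comparableUpTo_lintegral_hausdorffMeasure_image hP (hLβ β) ?_ (Nat.cast_nonneg _)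
      hf).mono (le_max_left _ _)
    rintro x ⟨hx, rfl⟩
    exact hLF hx
  · rw [← lintegral_prod_symm _ hm.aemeasurable, lintegral_indicator hFB]
    exact (hC f hf).mono (le_max_right _ _)

end ChangeOfVariables

section BoundaryDistance

section Metric

variable {X : Type*} [PseudoMetricSpace X] {Ω : Set X} {b : ℝ}

/-- The one-sided neighbourhood of width `b` of the boundary of `Ω`, inside `Ω`. -/
def collar (Ω : Set X) (b : ℝ) : Set X :=
  {x ∈ Ω | δ[Ω](x) < b}

/-- The part of `Ω` at distance at least `b` from the boundary. -/
def innerPart (Ω : Set X) (b : ℝ) : Set X :=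
  {x ∈ Ω | b ≤ δ[Ω](x)}

/-- The parallel surface `Σ_β` of points of `Ω` at distance exactly `β` from the boundary. -/
def parallelSurface (Ω : Set X) (β : ℝ) : Set X :=
  {x ∈ Ω | δ[Ω](x) = β}

theorem collar_union_innerPart (Ω : Set X) (b : ℝ) : collar Ω b ∪ innerPart Ω b = Ω := by
  ext x
  simp only [collar, innerPart, mem_union, mem_ofPred_eq]
  grind

theorem collar_mono {b b' : ℝ} (h : b ≤ b') : collar Ω b ⊆ collar Ω b' :=
  fun _ hx ↦ ⟨hx.1, hx.2.trans_le h⟩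

theorem isOpen_collar (hΩo : IsOpen Ω) : IsOpen (collar Ω b) :=
  hΩo.inter (isOpen_lt (continuous_infDist_pt _) continuous_const)

theorem measurableSet_parallelSurface [MeasurableSpace X] [OpensMeasurableSpace X]
    (hΩo : IsOpen Ω) (β : ℝ) : MeasurableSet (parallelSurface Ω β) :=
  hΩo.measurableSet.inter
    (measurableSet_eq_fun (continuous_infDist_pt _).measurable measurable_const)

theorem isCompact_innerPart [ProperSpace X] (hΩb : Bornology.IsBounded Ω) (hb : 0 < b) :
    IsCompact (innerPart Ω b) := by
  have : innerPart Ω b = closure Ω ∩ {x | b ≤ δ[Ω](x)} := by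
    refine Subset.antisymm (inter_subset_inter_left _ subset_closure) ?_
    rintro x ⟨hx, hxb⟩
    refine ⟨by_contra fun hxΩ ↦ ?_, hxb⟩
    have hxf : x ∈ frontier Ω := ⟨hx, fun h ↦ hxΩ (interior_subset h)⟩
    rw [mem_ofPred_eq, infDist_zero_of_mem hxf] at hxb
    exact hb.not_ge hxb
  rw [this]
  exact hΩb.isCompact_closure.inter_right (isClosed_le continuous_const (continuous_infDist_pt _))

theorem isCompact_frontier_of_isBounded [ProperSpace X] (hΩb : Bornology.IsBounded Ω) :
    IsCompact (frontier Ω) :=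
  hΩb.isCompact_closure.of_isClosed_subset isClosed_frontier frontier_subset_closure

theorem infDist_frontier_sub_le (Ω : Set X) (x y : X) : δ[Ω](x) - dist x y ≤ δ[Ω](y) := by
  linarith [infDist_le_infDist_add_dist (s := frontier Ω) (x := x) (y := y)]

theorem le_infDist_frontier_of_ball_subset (hΩo : IsOpen Ω) (hne : (frontier Ω).Nonempty) {x : X}
    {r : ℝ} (h : ball x r ⊆ Ω) : r ≤ δ[Ω](x) := by
  rw [le_infDist hne]
  intro q hq
  by_contra! hlt
  exact disjoint_left.1 (disjoint_frontier_iff_isOpen.2 hΩo) hq (h (mem_ball'.2 hlt))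

end Metric

theorem inter_frontier_nonempty_of_isPreconnected {X : Type*} [TopologicalSpace X] {s t : Set X}
    (hs : IsPreconnected s) (hst : (s ∩ t).Nonempty) (hst' : (s \ t).Nonempty) :
    (s ∩ frontier t).Nonempty := by
  by_contra! hfr
  have hcov : s ⊆ interior t ∪ (closure t)ᶜ := fun q hq ↦ by
    by_contra! h
    rw [mem_union, not_or, mem_compl_iff, not_not] at h
    exact hfr.subset ⟨hq, h.2, h.1⟩
  obtain ⟨x, hxs, hxt⟩ := hst
  obtain ⟨y, hys, hyt⟩ := hst'
  obtain ⟨q, -, hq, hq'⟩ := hs _ _ isOpen_interior isClosed_closure.isOpen_compl hcov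
    ⟨x, hxs, (hcov hxs).resolve_right (not_not.2 (subset_closure hxt))⟩
    ⟨y, hys, (hcov hys).resolve_left fun h ↦ hyt (interior_subset h)⟩
  exact hq' (subset_closure (interior_subset hq))

variable {E : Type*} [NormedAddCommGroup E] [NormedSpace ℝ E] {Ω : Set E} {x : E}

theorem ball_infDist_frontier_subset (hx : x ∈ Ω) : ball x δ[Ω](x) ⊆ Ω := by
  intro y hy
  by_contra hyΩ
  obtain ⟨q, hq, hqfr⟩ := inter_frontier_nonempty_of_isPreconnected
    (convex_ball x δ[Ω](x)).isPreconnected ⟨x, mem_ball_self (dist_nonneg.trans_lt hy), hx⟩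
    ⟨y, hy, hyΩ⟩
  exact (infDist_le_dist_of_mem hqfr).not_gt (mem_ball'.1 hq)

variable [Nontrivial E]

theorem nonempty_frontier_of_isBounded (hΩb : Bornology.IsBounded Ω) (hx : x ∈ Ω) :
    (frontier Ω).Nonempty :=
  nonempty_frontier_iff.2 ⟨⟨x, hx⟩, fun h ↦ NormedSpace.unbounded_univ ℝ E (h ▸ hΩb)⟩

theorem infDist_frontier_pos (hΩo : IsOpen Ω) (hΩb : Bornology.IsBounded Ω) (hx : x ∈ Ω) :
    0 < δ[Ω](x) := by
  rw [← isClosed_frontier.notMem_iff_infDist_pos (nonempty_frontier_of_isBounded hΩb hx)]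
  exact fun h ↦ disjoint_left.1 (disjoint_frontier_iff_isOpen.2 hΩo) h hx

theorem infDist_frontier_le_diam (hΩb : Bornology.IsBounded Ω) (hx : x ∈ Ω) :
    δ[Ω](x) ≤ diam Ω := by
  obtain ⟨q, hq⟩ := nonempty_frontier_of_isBounded hΩb hx
  rw [← diam_closure]
  exact (infDist_le_dist_of_mem hq).trans
    (dist_le_diam_of_mem hΩb.closure (subset_closure hx) (frontier_subset_closure hq))

end BoundaryDistance

section BoundaryRegularity

/-- `Ω` has `C¹` boundary: near each boundary point it is the strict sublevel set of a `C¹`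
function with nonvanishing derivative. -/
def HasC1Boundary {E : Type*} [NormedAddCommGroup E] [NormedSpace ℝ E] (Ω : Set E) : Prop :=
  ∀ p ∈ frontier Ω, ∃ (U : Set E) (f : E → ℝ), IsOpen U ∧ p ∈ U ∧ ContDiffOn ℝ 1 f U ∧
    (∀ x ∈ U, fderiv ℝ f x ≠ 0) ∧ Ω ∩ U = {x ∈ U | f x < 0}

theorem HasC2Boundary.hasC1Boundary {N : ℕ} {Ω : Set (EuclideanSpace ℝ (Fin N))}
    (hΩ : HasC2Boundary Ω) : HasC1Boundary Ω := by
  intro p hp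
  obtain ⟨U, f, hU, hpU, hf, hΩU⟩ := hΩ p hp
  exact ⟨U, f, hU, hpU, hf.of_le one_le_two, hΩU⟩

variable {E : Type*} [NormedAddCommGroup E] {Ω U U' : Set E} {κ r : ℝ} {e p : E}

/-- Interior cone condition in `U`: within `U`, the cone generated by the ball of radius `κ`
about the unit vector `e`, attached at any point of `Ω`, stays in `Ω`. -/
structure HasInteriorCone [NormedSpace ℝ E] (Ω : Set E) (κ : ℝ) (U : Set E) (e : E) : Prop where
  norm_eq_one : ‖e‖ = 1
  closedBall_inter_subset : ∀ z ∈ Ω ∩ U, ∀ s : ℝ, 0 ≤ s →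
    closedBall (z + s • e) (κ * s) ∩ U ⊆ Ω

/-- Inside `U`, moving from a point of `Ω` in the unit direction `e` stays in `Ω` and increases
the distance to the boundary at rate at least `κ`. -/
structure IsInwardDirection [NormedSpace ℝ E] (Ω : Set E) (κ : ℝ) (U : Set E) (e : E) :
    Prop where
  norm_eq_one : ‖e‖ = 1
  add_smul_mem : ∀ x ∈ Ω ∩ U, ∀ s : ℝ, 0 ≤ s → x + s • e ∈ U → x + s • e ∈ Ω
  le_infDist : ∀ x ∈ Ω ∩ U, ∀ s : ℝ, 0 ≤ s → x + s • e ∈ U → δ[Ω](x) + κ * s ≤ δ[Ω](x + s • e)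

theorem IsInwardDirection.mono [NormedSpace ℝ E] (h : IsInwardDirection Ω κ U e) (hU : U' ⊆ U) :
    IsInwardDirection Ω κ U' e where
  norm_eq_one := h.norm_eq_one
  add_smul_mem x hx s hs hxs := h.add_smul_mem x ⟨hx.1, hU hx.2⟩ s hs (hU hxs)
  le_infDist x hx s hs hxs := h.le_infDist x ⟨hx.1, hU hx.2⟩ s hs (hU hxs)

theorem exists_norm_eq_one_apply_eq_neg_norm [InnerProductSpace ℝ E] [CompleteSpace E]
    {ℓ : E →L[ℝ] ℝ} (hℓ : ℓ ≠ 0) : ∃ e : E, ‖e‖ = 1 ∧ ℓ e = -‖ℓ‖ := by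
  have hpos : ‖ℓ‖ ≠ 0 := norm_ne_zero_iff.2 hℓ
  set v := (InnerProductSpace.toDual ℝ E).symm ℓ with hv
  have hnorm : ‖v‖ = ‖ℓ‖ := LinearIsometryEquiv.norm_map _ _
  have hℓv : ℓ v = ‖ℓ‖ ^ 2 := by
    rw [← hnorm, ← real_inner_self_eq_norm_sq, hv, InnerProductSpace.toDual_symm_apply]
  refine ⟨-(‖ℓ‖⁻¹ • v), ?_, ?_⟩
  · rw [norm_neg, norm_smul, hnorm, norm_inv, norm_norm, inv_mul_cancel₀ hpos]
  · rw [map_neg, map_smul, hℓv, smul_eq_mul]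
    field_simp

theorem HasC1Boundary.exists_hasInteriorCone [InnerProductSpace ℝ E] [CompleteSpace E]
    (hΩ : HasC1Boundary Ω) (hκ0 : 0 ≤ κ) (hκ : κ < 1) (hp : p ∈ frontier Ω) :
    ∃ e, ∃ ρ > 0, HasInteriorCone Ω κ (ball p ρ) e := by
  obtain ⟨U, f, hU, hpU, hf, hf', hΩU⟩ := hΩ p hp
  have hstrict : HasStrictFDerivAt f (fderiv ℝ f p) p :=
    (hf.contDiffAt (hU.mem_nhds hpU)).hasStrictFDerivAt one_ne_zero
  obtain ⟨e, he, hfe⟩ := exists_norm_eq_one_apply_eq_neg_norm (hf' p hpU)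
  have hc : 0 < ‖fderiv ℝ f p‖ * (1 - κ) / (1 + κ) := by
    have := norm_pos_iff.2 (hf' p hpU)
    have := sub_pos.2 hκ
    positivity
  obtain ⟨s, hs, happ⟩ := hstrict.approximates_deriv_on_nhds (c := ⟨_, hc.le⟩) (Or.inr hc)
  obtain ⟨ρ, hρ, hsub⟩ := Metric.mem_nhds_iff.1 (Filter.inter_mem hs (hU.mem_nhds hpU))
  refine ⟨e, ρ, hρ, he, ?_⟩
  rintro z ⟨hzΩ, hz⟩ t ht y ⟨hyt, hy⟩
  have hfz : f z < 0 := (hΩU.subset ⟨hzΩ, (hsub hz).2⟩).2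
  suffices hle : f y ≤ f z from (hΩU.superset ⟨(hsub hy).2, hle.trans_lt hfz⟩).1
  rw [mem_closedBall, dist_eq_norm] at hyt
  have hyz : y - z = t • e + (y - (z + t • e)) := by abel
  have herr : f y - f z - fderiv ℝ f p (y - z) ≤ ‖fderiv ℝ f p‖ * (1 - κ) * t := by
    calc f y - f z - fderiv ℝ f p (y - z)
        ≤ ‖fderiv ℝ f p‖ * (1 - κ) / (1 + κ) * ‖y - z‖ :=
          (le_abs_self _).trans (happ _ (hsub hy).1 _ (hsub hz).1)
      _ ≤ ‖fderiv ℝ f p‖ * (1 - κ) / (1 + κ) * (t + κ * t) := by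
          gcongr
          rw [hyz]
          refine (norm_add_le _ _).trans (add_le_add ?_ hyt)
          rw [norm_smul, he, mul_one, Real.norm_of_nonneg ht]
      _ = ‖fderiv ℝ f p‖ * (1 - κ) * t := by field_simp
  have hlin : fderiv ℝ f p (y - z) ≤ -(‖fderiv ℝ f p‖ * (1 - κ) * t) := by
    have hu : fderiv ℝ f p (y - (z + t • e)) ≤ ‖fderiv ℝ f p‖ * (κ * t) :=
      (le_abs_self _).trans (((fderiv ℝ f p).le_opNorm _).trans (by gcongr))
    rw [hyz, map_add, map_smul, hfe, smul_eq_mul]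
    linarith
  linarith

theorem HasInteriorCone.isInwardDirection [NormedSpace ℝ E] (hΩo : IsOpen Ω)
    (hp : p ∈ frontier Ω) (hκ0 : 0 ≤ κ) (hκ : κ < 1)
    (h : HasInteriorCone Ω κ (ball p (4 * r)) e) : IsInwardDirection Ω κ (ball p r) e := by
  have hball : ∀ x ∈ Ω ∩ ball p r, ∀ s : ℝ, 0 ≤ s → x + s • e ∈ ball p r →
      0 < δ[Ω](x) ∧ ball (x + s • e) (δ[Ω](x) + κ * s) ⊆ Ω := by
    rintro x ⟨hx, hxp⟩ s hs hxs
    have hd : 0 < δ[Ω](x) := (isClosed_frontier.notMem_iff_infDist_pos ⟨p, hp⟩).1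
      fun hfr ↦ disjoint_left.1 (disjoint_frontier_iff_isOpen.2 hΩo) hfr hx
    have hdr : δ[Ω](x) < r := (infDist_le_dist_of_mem hp).trans_lt hxp
    have hsr : s < 2 * r := by
      have := dist_triangle_right (x + s • e) x p
      rw [dist_self_add_left, norm_smul, h.norm_eq_one, mul_one, Real.norm_of_nonneg hs] at this
      linarith [mem_ball.1 hxp, mem_ball.1 hxs]
    refine ⟨hd, fun z hz ↦ ?_⟩
    have hzp : z ∈ ball p (4 * r) := by
      have := dist_triangle z (x + s • e) p
      rw [mem_ball] at *
      nlinarith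
    rw [← ball_add_closedBall hd (by positivity)] at hz
    obtain ⟨y, hy, w, hw, rfl⟩ := hz
    have hyp : y ∈ ball p (4 * r) := by
      have := dist_triangle y x p
      rw [mem_ball] at *
      linarith
    refine h.closedBall_inter_subset y ⟨ball_infDist_frontier_subset hx hy, hyp⟩ s hs ⟨?_, hzp⟩
    simpa [mem_closedBall] using hw
  refine ⟨h.norm_eq_one, fun x hx s hs hxs ↦ ?_, fun x hx s hs hxs ↦ ?_⟩
  · obtain ⟨hd, hsub⟩ := hball x hx s hs hxs
    exact hsub (mem_ball_self (by positivity))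
  · exact le_infDist_frontier_of_ball_subset hΩo ⟨p, hp⟩ (hball x hx s hs hxs).2

theorem HasC1Boundary.exists_uniform_isInwardDirection [InnerProductSpace ℝ E] [ProperSpace E]
    (hΩ : HasC1Boundary Ω) (hΩo : IsOpen Ω) (hΩb : Bornology.IsBounded Ω) (hκ0 : 0 ≤ κ)
    (hκ : κ < 1) :
    ∃ r > 0, ∀ p ∈ frontier Ω, ∃ e, IsInwardDirection Ω κ (ball p r) e := by
  have hlocal : ∀ p ∈ frontier Ω, ∃ e, ∃ r > 0, IsInwardDirection Ω κ (ball p r) e := by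
    intro p hp
    obtain ⟨e, ρ, hρ, hcone⟩ := hΩ.exists_hasInteriorCone hκ0 hκ hp
    refine ⟨e, ρ / 4, by positivity, HasInteriorCone.isInwardDirection hΩo hp hκ0 hκ ?_⟩
    rwa [mul_div_cancel₀ ρ four_ne_zero]
  choose! e r hr hin using hlocal
  obtain ⟨δ, hδ, hleb⟩ := lebesgue_number_lemma_of_metric
    (c := fun p : frontier Ω ↦ ball (p : E) (r p)) (isCompact_frontier_of_isBounded hΩb)
    (fun _ ↦ isOpen_ball) fun p hp ↦ mem_iUnion.2 ⟨⟨p, hp⟩, mem_ball_self (hr p hp)⟩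
  refine ⟨δ, hδ, fun p hp ↦ ?_⟩
  obtain ⟨q, hq⟩ := hleb p hp
  exact ⟨e q, (hin q q.2).mono hq⟩

theorem exists_finset_collar_subset_iUnion_ball [NormedSpace ℝ E] [ProperSpace E] [Nontrivial E]
    (hΩb : Bornology.IsBounded Ω) (hr : 0 < r) :
    ∃ t : Finset E, ↑t ⊆ frontier Ω ∧ collar Ω (r / 2) ⊆ ⋃ p ∈ t, ball p r := by
  obtain ⟨t, ht, htf, hcov⟩ :=
    finite_cover_balls_of_compact (isCompact_frontier_of_isBounded hΩb) (half_pos hr)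
  refine ⟨htf.toFinset, by simpa using ht, fun x hx ↦ ?_⟩
  obtain ⟨q, hq, hxq⟩ := (infDist_lt_iff (nonempty_frontier_of_isBounded hΩb hx.1)).1 hx.2
  obtain ⟨p, hp, hqp⟩ := mem_iUnion₂.1 (hcov hq)
  refine mem_iUnion₂.2 ⟨p, by simpa using hp, ?_⟩
  rw [mem_ball] at *
  linarith [dist_triangle x q p]

end BoundaryRegularity

section Coarea

variable {E : Type*} [NormedAddCommGroup E] [InnerProductSpace ℝ E] {Ω B : Set E} {κ r : ℝ}
  {e p : E}

/-- The coordinates in which the parallel surfaces of `Ω` become horizontal: the orthogonal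
projection along `e` and the distance to the boundary. -/
noncomputable def straightening (Ω : Set E) (e x : E) : (ℝ ∙ e)ᗮ × ℝ :=
  ((ℝ ∙ e)ᗮ.orthogonalProjectionOnto x, δ[Ω](x))

theorem lipschitzWith_straightening (Ω : Set E) (e : E) :
    LipschitzWith 1 (straightening Ω e) := by
  have hP : LipschitzWith 1 (ℝ ∙ e)ᗮ.orthogonalProjectionOnto :=
    ContinuousLinearMap.lipschitzWith_of_opNorm_le (Submodule.orthogonalProjectionOnto_norm_le _)
  exact (hP.prodMk (lipschitz_infDist_pt (frontier Ω))).weaken (max_self _).le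

theorem norm_sub_inner_smul_le_dist_straightening (Ω : Set E) (he : ‖e‖ = 1) (x x' : E) :
    ‖x - x' - inner ℝ e (x - x') • e‖ ≤ dist (straightening Ω e x) (straightening Ω e x') := by
  calc ‖x - x' - inner ℝ e (x - x') • e‖
      = ‖(ℝ ∙ e)ᗮ.orthogonalProjectionOnto (x - x')‖ := by
        rw [Submodule.coe_norm, Submodule.coe_orthogonalProjectionOnto_apply,
          Submodule.starProjection_orthogonal_val,
          Submodule.starProjection_unit_singleton ℝ he]
    _ = dist (straightening Ω e x).1 (straightening Ω e x').1 := by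
        rw [map_sub, dist_eq_norm, straightening, straightening]
    _ ≤ _ := le_max_left _ _

theorem IsInwardDirection.dist_le_mul_dist_straightening
    (h : IsInwardDirection Ω κ (ball p (3 * r)) e) (hκ : 0 < κ) {x x' : E}
    (hx : x ∈ Ω ∩ ball p r) (hx' : x' ∈ Ω ∩ ball p r) :
    dist x x' ≤ (1 + 2 / κ) * dist (straightening Ω e x) (straightening Ω e x') := by
  wlog hs : 0 ≤ inner ℝ e (x - x') generalizing x x'
  · rw [dist_comm x, dist_comm (straightening Ω e x)]
    refine this hx' hx ?_
    rw [← neg_sub, inner_neg_right]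
    linarith
  set s := inner ℝ e (x - x')
  set D := dist (straightening Ω e x) (straightening Ω e x')
  have hse : ‖s • e‖ = s := by rw [norm_smul, h.norm_eq_one, mul_one, Real.norm_of_nonneg hs]
  have hv : ‖x - x' - s • e‖ ≤ D :=
    norm_sub_inner_smul_le_dist_straightening Ω h.norm_eq_one x x'
  have hsx : s ≤ dist x x' := by
    simpa [h.norm_eq_one, dist_eq_norm] using real_inner_le_norm e (x - x')
  have hp : dist x p < r ∧ dist x' p < r := ⟨hx.2, hx'.2⟩
  have hball : x' + s • e ∈ ball p (3 * r) := by
    have := dist_triangle (x' + s • e) x' p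
    rw [dist_self_add_left, hse] at this
    rw [mem_ball]
    linarith [dist_triangle_right x x' p]
  have hup : δ[Ω](x') + κ * s ≤ δ[Ω](x' + s • e) :=
    h.le_infDist x' ⟨hx'.1, ball_subset_ball (by linarith [dist_nonneg (x := x) (y := p)]) hx'.2⟩
      s hs hball
  have hside : δ[Ω](x' + s • e) - ‖x - x' - s • e‖ ≤ δ[Ω](x) := by
    have := infDist_frontier_sub_le Ω (x' + s • e) x
    rwa [dist_comm, dist_eq_norm, ← sub_sub] at this
  have hδ : δ[Ω](x) - δ[Ω](x') ≤ D := (le_abs_self _).trans (le_max_right _ _)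
  have hsD : s ≤ 2 / κ * D := by
    rw [div_mul_eq_mul_div, le_div_iff₀ hκ]
    linarith
  calc dist x x' = ‖s • e + (x - x' - s • e)‖ := by rw [dist_eq_norm, add_sub_cancel]
    _ ≤ s + ‖x - x' - s • e‖ := (norm_add_le _ _).trans_eq (by rw [hse])
    _ ≤ (1 + 2 / κ) * D := by linarith

theorem IsInwardDirection.exists_leftInvOn_straightening [FiniteDimensional ℝ E]
    (h : IsInwardDirection Ω κ (ball p (3 * r)) e) (hκ : 0 < κ) :
    ∃ (K : ℝ≥0) (L : (ℝ ∙ e)ᗮ × ℝ → E), LipschitzWith K (straightening Ω e) ∧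
      LipschitzWith K L ∧ LeftInvOn L (straightening Ω e) (Ω ∩ ball p r) := by
  obtain ⟨K, L, hL, hLF⟩ := exists_lipschitzWith_leftInvOn (B := Ω ∩ ball p r)
    (F := straightening Ω e) (K := (1 + 2 / κ).toNNReal)
    (.of_le_mul_dist fun x x' ↦ by
      rw [Real.coe_toNNReal _ (by positivity)]
      exact h.dist_le_mul_dist_straightening hκ x.2 x'.2)
  exact ⟨max 1 K, L, (lipschitzWith_straightening Ω e).weaken (le_max_left _ _),
    hL.weaken (le_max_right _ _), hLF⟩

theorem finrank_eq_finrank_orthogonal_span_singleton_add_one [FiniteDimensional ℝ E]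
    (he : e ≠ 0) : finrank ℝ E = finrank ℝ (ℝ ∙ e)ᗮ + 1 := by
  rw [← Submodule.finrank_add_finrank_orthogonal (ℝ ∙ e), finrank_span_singleton he, add_comm]

variable [FiniteDimensional ℝ E]

theorem HasC1Boundary.exists_finset_inward_cover [Nontrivial E] (hΩ : HasC1Boundary Ω)
    (hΩo : IsOpen Ω) (hΩb : Bornology.IsBounded Ω) (hκ0 : 0 ≤ κ) (hκ : κ < 1) :
    ∃ b₀ > 0, ∃ (r : ℝ) (t : Finset E), collar Ω b₀ ⊆ ⋃ p ∈ t, ball p r ∧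
      ∀ p ∈ t, ∃ e, IsInwardDirection Ω κ (ball p (3 * r)) e := by
  have : ProperSpace E := FiniteDimensional.proper ℝ E
  obtain ⟨r, hr, hin⟩ := hΩ.exists_uniform_isInwardDirection hΩo hΩb hκ0 hκ
  obtain ⟨t, ht, hcover⟩ :=
    exists_finset_collar_subset_iUnion_ball hΩb (show 0 < r / 3 by positivity)
  refine ⟨r / 3 / 2, by positivity, r / 3, t, hcover, fun p hp ↦ ?_⟩
  rw [mul_div_cancel₀ r three_ne_zero]
  exact hin p (ht hp)

theorem HasC1Boundary.exists_le_infDist [Nontrivial E]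
    (hΩ : HasC1Boundary Ω) (hΩo : IsOpen Ω) (hΩb : Bornology.IsBounded Ω) (hκ0 : 0 ≤ κ)
    (hκ : κ < 1) :
    ∃ r > 0, ∀ s ∈ Ioc 0 r, ∀ y ∈ Ω, ∃ z ∈ Ω, dist z y = s ∧ κ * s ≤ δ[Ω](z) := by
  have : ProperSpace E := FiniteDimensional.proper ℝ E
  obtain ⟨r, hr, hin⟩ := hΩ.exists_uniform_isInwardDirection hΩo hΩb hκ0 hκ
  refine ⟨r / 4, by positivity, fun s ⟨hs0, hs⟩ y hy ↦ ?_⟩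
  have hdist {v : E} (hv : ‖v‖ = 1) : dist (y + s • v) y = s := by
    rw [dist_self_add_left, norm_smul, hv, mul_one, Real.norm_of_nonneg hs0.le]
  rcases lt_or_ge δ[Ω](y) (r / 2) with hyr | hyr
  · obtain ⟨p, hp, hyp⟩ := (infDist_lt_iff (nonempty_frontier_of_isBounded hΩb hy)).1 hyr
    obtain ⟨e, he⟩ := hin p hp
    have hyball : y ∈ Ω ∩ ball p r := ⟨hy, by rw [mem_ball]; linarith⟩
    have hzball : y + s • e ∈ ball p r := by
      rw [mem_ball]
      linarith [dist_triangle (y + s • e) y p, hdist he.norm_eq_one]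
    refine ⟨y + s • e, he.add_smul_mem y hyball s hs0.le hzball, hdist he.norm_eq_one, ?_⟩
    exact (le_add_of_nonneg_left infDist_nonneg).trans (he.le_infDist y hyball s hs0.le hzball)
  · obtain ⟨v, hv⟩ := exists_norm_eq E zero_le_one
    have hdz := hdist hv
    have hδz := infDist_frontier_sub_le Ω y (y + s • v)
    rw [dist_comm] at hδz
    exact ⟨y + s • v, ball_infDist_frontier_subset hy (by rw [mem_ball]; linarith), hdz,
      by nlinarith⟩

variable [MeasurableSpace E] [BorelSpace E]

theorem IsInwardDirection.exists_coareaUpTo (μ : Measure E) [μ.IsAddHaarMeasure]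
    (h : IsInwardDirection Ω κ (ball p (3 * r)) e) (hκ : 0 < κ) (hB : MeasurableSet B)
    (hBΩ : B ⊆ Ω ∩ ball p r) :
    ∃ C : ℝ≥0, CoareaUpTo C μ μH[(finrank ℝ E : ℝ) - 1] (δ[Ω](·)) B := by
  obtain ⟨K, L, hF, hL, hLF⟩ := h.exists_leftInvOn_straightening hκ
  have hdim := finrank_eq_finrank_orthogonal_span_singleton_add_one
    (norm_ne_zero_iff.1 (h.norm_eq_one.trans_ne one_ne_zero))
  have hd : (finrank ℝ E : ℝ) - 1 = finrank ℝ (ℝ ∙ e)ᗮ := by rw [hdim]; push_cast; ring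
  rw [hd]
  exact exists_coareaUpTo_of_leftInvOn μ hdim hF hL (hLF.mono hBΩ) hB

theorem HasC1Boundary.exists_coareaUpTo [Nontrivial E] (μ : Measure E) [μ.IsAddHaarMeasure]
    (hΩ : HasC1Boundary Ω) (hΩo : IsOpen Ω) (hΩb : Bornology.IsBounded Ω) :
    ∃ b₀ > 0, ∀ b ≤ b₀, ∃ C : ℝ≥0,
      CoareaUpTo C μ μH[(finrank ℝ E : ℝ) - 1] (δ[Ω](·)) (collar Ω b) := by
  obtain ⟨b₀, hb₀, r, t, hcover, hin⟩ :=
    hΩ.exists_finset_inward_cover hΩo hΩb (κ := 1 / 2) (by norm_num) (by norm_num)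
  refine ⟨b₀, hb₀, fun b hb ↦ ?_⟩
  have hlocal : ∀ p ∈ t, ∃ C : ℝ≥0, CoareaUpTo C μ μH[(finrank ℝ E : ℝ) - 1] (δ[Ω](·))
      (collar Ω b ∩ ball p r) := fun p hp ↦ by
    obtain ⟨e, he⟩ := hin p hp
    exact he.exists_coareaUpTo μ one_half_pos
      ((isOpen_collar hΩo).measurableSet.inter measurableSet_ball)
      (inter_subset_inter_left _ (sep_subset _ _))
  choose! C hC using hlocal
  exact ⟨_, .of_finset_cover ((collar_mono hb).trans hcover) hC⟩

end Coarea

section SingularIntegrals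

theorem antitone_rpow_neg {q : ℝ} (hq : 0 ≤ q) : Antitone fun x : ℝ≥0∞ ↦ x ^ (-q) := by
  intro x y hxy
  simp only [ENNReal.rpow_neg]
  exact ENNReal.inv_le_inv.2 (ENNReal.rpow_le_rpow hxy hq)

section Riesz

variable {E : Type*} [NormedAddCommGroup E] [NormedSpace ℝ E] [FiniteDimensional ℝ E]
  [MeasurableSpace E] [BorelSpace E] (μ : Measure E) [μ.IsAddHaarMeasure] {q : ℝ}

theorem lintegral_ball_enorm_rpow_neg_lt_top [Nontrivial E] (hq : q < finrank ℝ E) (R : ℝ) :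
    ∫⁻ x in ball (0 : E) R, ‖x‖ₑ ^ (-q) ∂μ < ⊤ := by
  have hint : IntegrableOn (fun x : E ↦ ‖x‖ ^ (-q)) (ball 0 R) μ :=
    integrableOn_ball_of_norm_le_rpow Module.finrank_pos (C := 1) hq
      (.of_forall fun x ↦ by rw [Real.norm_of_nonneg (by positivity), one_mul])
      (Measurable.aestronglyMeasurable (by fun_prop))
  refine (lintegral_congr_ae ?_).trans_lt hint.hasFiniteIntegral
  filter_upwards [ae_restrict_of_ae (Measure.ae_ne μ (0 : E))] with x hx
  have hx' : 0 < ‖x‖ := norm_pos_iff.2 hx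
  rw [Real.enorm_of_nonneg (by positivity), ← ENNReal.ofReal_rpow_of_pos hx', ofReal_norm]

theorem exists_setLIntegral_edist_rpow_neg_le [Nontrivial E] (hq0 : 0 ≤ q)
    (hq : q < finrank ℝ E) {s : Set E} (hs : μ s ≠ ⊤) :
    ∃ M : ℝ≥0, ∀ y, ∫⁻ x in s, edist x y ^ (-q) ∂μ ≤ M := by
  set f : E → ℝ≥0∞ := (ball 0 1).indicator fun x ↦ ‖x‖ₑ ^ (-q) with hf
  have hfint : ∫⁻ x, f x ∂μ ≠ ⊤ := by
    rw [lintegral_indicator measurableSet_ball]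
    exact (lintegral_ball_enorm_rpow_neg_lt_top μ hq 1).ne
  have hpt (x y : E) : edist x y ^ (-q) ≤ f (x - y) + 1 := by
    rw [edist_eq_enorm_sub]
    by_cases hxy : x - y ∈ ball (0 : E) 1
    · rw [hf, indicator_of_mem hxy]
      exact le_self_add
    · have : 1 ≤ ‖x - y‖ₑ := by
        rw [← ofReal_norm, ENNReal.one_le_ofReal]
        simpa using hxy
      calc ‖x - y‖ₑ ^ (-q) ≤ 1 ^ (-q) := antitone_rpow_neg hq0 this
        _ ≤ f (x - y) + 1 := by rw [ENNReal.one_rpow]; exact le_add_self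
  refine ⟨(∫⁻ x, f x ∂μ + μ s).toNNReal, fun y ↦ ?_⟩
  rw [ENNReal.coe_toNNReal (by finiteness)]
  calc ∫⁻ x in s, edist x y ^ (-q) ∂μ ≤ ∫⁻ x in s, (f (x - y) + 1) ∂μ :=
        lintegral_mono fun x ↦ hpt x y
    _ ≤ ∫⁻ x, f (x - y) ∂μ + μ s := by
        rw [lintegral_add_right _ measurable_const, setLIntegral_one]
        gcongr 1
        exact setLIntegral_le_lintegral _ _
    _ = ∫⁻ x, f x ∂μ + μ s := by rw [lintegral_sub_right_eq_self]

theorem exists_setLIntegral_prod_edist_rpow_neg_le [Nontrivial E] (hq0 : 0 ≤ q)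
    (hq : q < finrank ℝ E) {k : ℝ} (hk : k < 1) {s : Set E} (hs : μ s ≠ ⊤) (b : ℝ) :
    ∃ M : ℝ≥0, ∀ y, ∫⁻ z in s ×ˢ ball (0 : ℝ) b, edist z.1 y ^ (-q) * ‖z.2‖ₑ ^ (-k)
      ∂μ.prod volume ≤ M := by
  obtain ⟨M, hM⟩ := exists_setLIntegral_edist_rpow_neg_le μ hq0 hq hs
  have hball : ∫⁻ t in ball (0 : ℝ) b, ‖t‖ₑ ^ (-k) ≠ ⊤ :=
    (lintegral_ball_enorm_rpow_neg_lt_top volume (by simpa using hk) b).ne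
  refine ⟨M * (∫⁻ t in ball (0 : ℝ) b, ‖t‖ₑ ^ (-k)).toNNReal, fun y ↦ ?_⟩
  rw [← Measure.prod_restrict, lintegral_prod_mul (f := fun x ↦ edist x y ^ (-q))
    (g := fun t : ℝ ↦ ‖t‖ₑ ^ (-k)) (by fun_prop) (by fun_prop), ENNReal.coe_mul,
    ENNReal.coe_toNNReal hball]
  gcongr
  exact hM y

end Riesz

theorem rpow_mul_rpow_neg_add_le {a s t : ℝ≥0∞} (ha : a ≠ 0) (hat : a ≤ t) (hst : s ≤ t)
    (ht : t ≠ ⊤) {k m : ℝ} (hk : 0 ≤ k) (hm : 0 ≤ m) (σ : ℝ) :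
    a ^ σ * t ^ (-(k + m)) ≤ a ^ (σ - k) * s ^ (-m) := by
  have ht0 : t ≠ 0 := (pos_iff_ne_zero.2 ha |>.trans_le hat).ne'
  calc a ^ σ * t ^ (-(k + m)) = a ^ σ * t ^ (-k) * t ^ (-m) := by
        rw [neg_add, ENNReal.rpow_add _ _ ht0 ht, mul_assoc]
    _ ≤ a ^ σ * a ^ (-k) * s ^ (-m) := by
        gcongr a ^ σ * ?_ * ?_
        · exact antitone_rpow_neg hk hat
        · exact antitone_rpow_neg hm hst
    _ = a ^ (σ - k) * s ^ (-m) := by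
        rw [← ENNReal.rpow_add _ _ ha (ne_top_of_le_ne_top ht hat), sub_eq_add_neg]

section FarField

variable {E : Type*} [NormedAddCommGroup E] [InnerProductSpace ℝ E] {Ω : Set E}
  {κ r b σ : ℝ} {e p : E}

theorem lipschitzWith_fst_straightening (Ω : Set E) (e : E) :
    LipschitzWith 1 fun x ↦ (straightening Ω e x).1 := by
  simpa [Function.comp_def] using
    LipschitzWith.prod_fst.comp (lipschitzWith_straightening Ω e)

theorem ofReal_infDist_rpow_mul_le_straightening (e : E) {x y : E} (hδ : 0 < δ[Ω](x))
    (hxy : δ[Ω](x) ≤ dist x y) {k m : ℝ} (hk : 0 ≤ k) (hm : 0 ≤ m) (σ : ℝ) :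
    ENNReal.ofReal δ[Ω](x) ^ σ * edist x y ^ (-(k + m)) ≤
      edist (straightening Ω e x).1 (straightening Ω e y).1 ^ (-m) *
        ‖(straightening Ω e x).2‖ₑ ^ (-(k - σ)) := by
  rw [mul_comm (edist _ _ ^ (-m)), neg_sub, show (straightening Ω e x).2 = δ[Ω](x) from rfl,
    Real.enorm_of_nonneg hδ.le]
  have hδt : ENNReal.ofReal δ[Ω](x) ≤ edist x y := by
    rw [edist_dist]
    exact ENNReal.ofReal_le_ofReal hxy
  exact rpow_mul_rpow_neg_add_le (by simpa using hδ) hδt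
    (by simpa using lipschitzWith_fst_straightening Ω e x y) (edist_ne_top _ _) hk hm σ

variable [FiniteDimensional ℝ E] [MeasurableSpace E] [BorelSpace E] (μ : Measure E)
  [μ.IsAddHaarMeasure]

theorem IsInwardDirection.exists_setLIntegral_infDist_rpow_mul_le [Nontrivial E]
    (h : IsInwardDirection Ω κ (ball p (3 * r)) e) (hκ : 0 < κ) (hΩo : IsOpen Ω)
    (hΩb : Bornology.IsBounded Ω) {k m : ℝ} (hk0 : 0 ≤ k) (hk : k < σ + 1) (hm0 : 0 ≤ m)
    (hm : m < finrank ℝ E - 1) :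
    ∃ M : ℝ≥0, ∀ y, ∫⁻ x in collar Ω b ∩ ball p r ∩ {x | δ[Ω](x) ≤ dist x y},
      ENNReal.ofReal δ[Ω](x) ^ σ * edist x y ^ (-(k + m)) ∂μ ≤ M := by
  obtain ⟨K, L, hF, hL, hLF⟩ := h.exists_leftInvOn_straightening hκ
  have hdim := finrank_eq_finrank_orthogonal_span_singleton_add_one
    (norm_ne_zero_iff.1 (h.norm_eq_one.trans_ne one_ne_zero))
  have hm' : m < finrank ℝ (ℝ ∙ e)ᗮ := by rw [hdim] at hm; push_cast at hm; linarith
  have : Nontrivial (ℝ ∙ e)ᗮ :=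
    Module.nontrivial_of_finrank_pos (R := ℝ) (by exact_mod_cast hm0.trans_lt hm')
  set P := fun x ↦ (straightening Ω e x).1
  obtain ⟨M, hM⟩ := exists_setLIntegral_prod_edist_rpow_neg_le (volume : Measure (ℝ ∙ e)ᗮ)
    hm0 hm' (k := k - σ) (by linarith) (s := ball (P p) r) measure_ball_lt_top.ne b
  have hB : MeasurableSet (collar Ω b ∩ ball p r) :=
    (isOpen_collar hΩo).measurableSet.inter measurableSet_ball
  obtain ⟨C, hC⟩ := exists_setLIntegral_comp_le_lintegral μ (volume.prod volume)
    (by simp [hdim]) hF hL (hLF.mono (inter_subset_inter_left _ (sep_subset _ _))) hB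
  refine ⟨C * M, fun y ↦ ?_⟩
  set S := ball (P p) r ×ˢ ball (0 : ℝ) b
  set φ : (ℝ ∙ e)ᗮ × ℝ → ℝ≥0∞ := fun z ↦ edist z.1 (P y) ^ (-m) * ‖z.2‖ₑ ^ (-(k - σ))
  have hS : MeasurableSet S := measurableSet_ball.prod measurableSet_ball
  calc _ ≤ ∫⁻ x in collar Ω b ∩ ball p r ∩ {x | δ[Ω](x) ≤ dist x y},
        S.indicator φ (straightening Ω e x) ∂μ := by
        refine setLIntegral_mono' (hB.inter (measurableSet_le (by fun_prop) (by fun_prop))) ?_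
        rintro x ⟨⟨⟨hx, hxb⟩, hxp⟩, hxy⟩
        have hδ : 0 < δ[Ω](x) := infDist_frontier_pos hΩo hΩb hx
        have hxS : straightening Ω e x ∈ S := ⟨mem_ball.2 <|
            ((lipschitzWith_fst_straightening Ω e).dist_le_mul x p).trans_lt (by simpa using hxp),
          by simpa [straightening, abs_of_pos hδ] using hxb⟩
        rw [indicator_of_mem hxS]
        exact ofReal_infDist_rpow_mul_le_straightening e hδ hxy hk0 hm0 σ
    _ ≤ ∫⁻ x in collar Ω b ∩ ball p r, S.indicator φ (straightening Ω e x) ∂μ :=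
        lintegral_mono_set inter_subset_left
    _ ≤ C * ∫⁻ z, S.indicator φ z ∂volume.prod volume :=
        hC _ (Measurable.indicator (by fun_prop) hS)
    _ ≤ ↑(C * M) := by
        rw [lintegral_indicator hS, ENNReal.coe_mul]
        gcongr
        exact hM (P y)

theorem HasC1Boundary.exists_setLIntegral_infDist_rpow_mul_le [Nontrivial E]
    (hΩ : HasC1Boundary Ω) (hΩo : IsOpen Ω) (hΩb : Bornology.IsBounded Ω) {q : ℝ}
    (hdim : 1 < finrank ℝ E) (hσ : -1 < σ) (hq0 : 0 ≤ q) (hq : q < finrank ℝ E + σ) :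
    ∃ b₀ > 0, ∃ M : ℝ≥0, ∀ y, ∫⁻ x in collar Ω b₀ ∩ {x | δ[Ω](x) ≤ dist x y},
      ENNReal.ofReal δ[Ω](x) ^ σ * edist x y ^ (-q) ∂μ ≤ M := by
  obtain ⟨b₀, hb₀, r, t, hcover, hin⟩ :=
    hΩ.exists_finset_inward_cover hΩo hΩb (κ := 1 / 2) (by norm_num) (by norm_num)
  obtain ⟨k, hk0, hkq, hk, hkm⟩ :
      ∃ k, 0 ≤ k ∧ k ≤ q ∧ k < σ + 1 ∧ q - k < finrank ℝ E - 1 := by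
    have hdim' : (1 : ℝ) < finrank ℝ E := by exact_mod_cast hdim
    refine ⟨min q (max 0 ((q - (finrank ℝ E - 1) + (σ + 1)) / 2)), ?_⟩
    grind
  have hlocal : ∀ p ∈ t, ∃ M : ℝ≥0, ∀ y,
      ∫⁻ x in collar Ω b₀ ∩ ball p r ∩ {x | δ[Ω](x) ≤ dist x y},
        ENNReal.ofReal δ[Ω](x) ^ σ * edist x y ^ (-(k + (q - k))) ∂μ ≤ M := fun p hp ↦ by
    obtain ⟨e, he⟩ := hin p hp
    exact he.exists_setLIntegral_infDist_rpow_mul_le μ one_half_pos hΩo hΩb hk0 hk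
      (sub_nonneg.2 hkq) hkm
  choose! M hM using hlocal
  simp only [add_sub_cancel] at hM
  refine ⟨b₀, hb₀, (1 + t.card) * ∑ p ∈ t, M p, fun y ↦ ?_⟩
  refine (ComparableUpTo.setLIntegral_finset_cover t (inter_subset_left.trans hcover) _).1.trans ?_
  push_cast
  gcongr with p hp
  rw [inter_right_comm]
  exact hM p hp y

end FarField

end SingularIntegrals

section BoundaryKernel

variable {E : Type*} [NormedAddCommGroup E] [InnerProductSpace ℝ E] [FiniteDimensional ℝ E]
  [Nontrivial E] [MeasurableSpace E] [BorelSpace E] (μ : Measure E) [μ.IsAddHaarMeasure]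
  {Ω : Set E} {ε : ℝ}

theorem HasC1Boundary.exists_comparableUpTo_setLIntegral_collar (hΩ : HasC1Boundary Ω)
    (hΩo : IsOpen Ω) (hΩb : Bornology.IsBounded Ω) (hε : 0 < ε) (C : ℝ≥0) :
    ∃ b > 0, ∃ C' : ℝ≥0, ∀ f : E → ℝ≥0∞, Measurable (Ω.indicator f) →
      (∀ β ∈ Ioo 0 ε, ComparableUpTo C
        (∫⁻ x in parallelSurface Ω β, f x ∂μH[(finrank ℝ E : ℝ) - 1]) 1) →
      ComparableUpTo C' (∫⁻ x in collar Ω b, f x ∂μ) (ENNReal.ofReal b) := by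
  obtain ⟨b₀, hb₀, hcoarea⟩ := hΩ.exists_coareaUpTo μ hΩo hΩb
  obtain ⟨C₁, hC₁⟩ := hcoarea (min b₀ ε) (min_le_left _ _)
  refine ⟨min b₀ ε, lt_min hb₀ hε, C₁ * (C₁ * C), fun f hf hslice ↦ ?_⟩
  have hindicator {S : Set E} (hS : MeasurableSet S) (hSΩ : S ⊆ Ω) (σ : Measure E) :
      ∫⁻ x in S, Ω.indicator f x ∂σ = ∫⁻ x in S, f x ∂σ :=
    setLIntegral_congr_fun hS fun x hx ↦ indicator_of_mem (hSΩ hx) _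
  rw [← hindicator (isOpen_collar hΩo).measurableSet (sep_subset _ _), ← sub_zero (min b₀ ε),
    ← Real.volume_Ioo, sub_zero]
  refine hC₁.comparableUpTo_setLIntegral measurableSet_Ioo
    (fun x hx ↦ ⟨infDist_frontier_pos hΩo hΩb hx.1, hx.2⟩) hf fun β hβ ↦ ?_
  have hfiber : collar Ω (min b₀ ε) ∩ (δ[Ω](·)) ⁻¹' {β} = parallelSurface Ω β :=
    ext fun x ↦ ⟨fun hx ↦ ⟨hx.1.1, hx.2⟩, fun hx ↦ ⟨⟨hx.1, hx.2.trans_lt hβ.2⟩, hx.2⟩⟩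
  rw [hfiber, hindicator (measurableSet_parallelSurface hΩo β) (sep_subset _ _)]
  exact hslice β ⟨hβ.1, hβ.2.trans_le (min_le_right _ _)⟩

theorem HasC1Boundary.exists_comparableUpTo_setLIntegral_one (hΩ : HasC1Boundary Ω)
    (hΩo : IsOpen Ω) (hΩb : Bornology.IsBounded Ω) {Y : Type*} [TopologicalSpace Y] {P : Set Y}
    (hP : IsCompact P) {k : E → Y → ℝ} (hk : ContinuousOn (Function.uncurry k) (Ω ×ˢ P))
    (hε : 0 < ε) {C : ℝ≥0}
    (hslice : ∀ y ∈ P, ∀ β ∈ Ioo 0 ε, ComparableUpTo C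
      (∫⁻ x in parallelSurface Ω β, ENNReal.ofReal (k x y) ∂μH[(finrank ℝ E : ℝ) - 1]) 1) :
    ∃ C' : ℝ≥0, ∀ y ∈ P, ComparableUpTo C' (∫⁻ x in Ω, ENNReal.ofReal (k x y) ∂μ) 1 := by
  obtain ⟨b, hb, C₁, hC₁⟩ := hΩ.exists_comparableUpTo_setLIntegral_collar μ hΩo hΩb hε C
  have hinner := isCompact_innerPart hΩb hb
  obtain ⟨M, hM⟩ := (hinner.prod hP).exists_bound_of_continuousOn
    (hk.mono (prod_mono_left (sep_subset _ _)))
  have hμ : μ (innerPart Ω b) ≠ ⊤ := hinner.measure_lt_top.ne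
  refine ⟨b.toNNReal⁻¹ * C₁ + (C₁ * b.toNNReal + M.toNNReal * (μ (innerPart Ω b)).toNNReal),
    fun y hy ↦ ?_⟩
  have hky : Measurable (Ω.indicator fun x ↦ ENNReal.ofReal (k x y)) := by
    classical
    rw [← piecewise_eq_indicator]
    exact (ENNReal.continuous_ofReal.comp_continuousOn (hk.uncurry_right y hy)).measurable_piecewise
      continuousOn_const hΩo.measurableSet
  obtain ⟨hupper, hlower⟩ := hC₁ _ hky (hslice y hy)
  unfold ComparableUpTo
  push_cast
  rw [ENNReal.coe_inv (by simpa using hb), ENNReal.coe_toNNReal hμ, mul_one]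
  change _ ≤ (ENNReal.ofReal b)⁻¹ * C₁ + (C₁ * ENNReal.ofReal b + ENNReal.ofReal M * _) ∧
    1 ≤ ((ENNReal.ofReal b)⁻¹ * C₁ + _) * _
  constructor
  · refine le_add_left ?_
    calc ∫⁻ x in Ω, ENNReal.ofReal (k x y) ∂μ
        ≤ ∫⁻ x in collar Ω b, ENNReal.ofReal (k x y) ∂μ +
            ∫⁻ x in innerPart Ω b, ENNReal.ofReal (k x y) ∂μ := by
          conv_lhs => rw [← collar_union_innerPart Ω b]
          exact lintegral_union_le _ _ _
      _ ≤ C₁ * ENNReal.ofReal b + ∫⁻ _ in innerPart Ω b, ENNReal.ofReal M ∂μ := by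
          refine add_le_add hupper (setLIntegral_mono' hinner.measurableSet fun x hx ↦ ?_)
          exact ENNReal.ofReal_le_ofReal ((le_abs_self _).trans (hM (x, y) ⟨hx, hy⟩))
      _ = _ := by rw [setLIntegral_const]
  · calc 1 = (ENNReal.ofReal b)⁻¹ * ENNReal.ofReal b :=
          (ENNReal.inv_mul_cancel (by simpa using hb) ENNReal.ofReal_ne_top).symm
      _ ≤ (ENNReal.ofReal b)⁻¹ * (C₁ * ∫⁻ x in Ω, ENNReal.ofReal (k x y) ∂μ) := by
          gcongr
          exact hlower.trans (by gcongr; exact sep_subset _ _)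
      _ ≤ _ := by rw [← mul_assoc]; gcongr; exact le_self_add

end BoundaryKernel

section GreenKernel

section Pointwise

variable {X : Type*} [MetricSpace X] {Ω : Set X} {n α αs a c₀ β₁ : ℝ} {Φ : X → ℝ}
  {G : X → X → ℝ}

/-- The Green kernel estimates (H1)–(H4) in dimension `n`: `G` is the Green kernel and `Φ` the
ground state. -/
structure GreenEstimates {X : Type*} [PseudoMetricSpace X] (Ω : Set X) (n α αs a c₀ β₁ : ℝ)
    (Φ : X → ℝ) (G : X → X → ℝ) : Prop where
  two_le : 2 ≤ a
  one_le : 1 ≤ c₀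
  pos : 0 < β₁
  near : ∀ β ∈ Ioo 0 β₁, ∀ x ∈ Ω, δ[Ω](x) = β → ∀ y ∈ Ω, 0 < dist x y → dist x y < a * β →
    c₀⁻¹ * dist x y ^ (2 - n) * Φ y ≤ Φ x * G x y ∧
      Φ x * G x y ≤ c₀ * dist x y ^ (2 - n) * Φ y
  far : ∀ β ∈ Ioo 0 β₁, ∀ x ∈ Ω, δ[Ω](x) = β → ∀ y ∈ Ω, a * β ≤ dist x y →
    Φ x * G x y ≤ c₀ * β ^ (2 * αs) * dist x y ^ (2 - n - 2 * α) * Φ y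
  interior : ∀ b : ℝ, 0 < b → ∃ Cb : ℝ, 1 ≤ Cb ∧ ∀ x ∈ Ω, ∀ y ∈ Ω, 0 < dist x y →
    dist x y ≤ b⁻¹ * min δ[Ω](x) δ[Ω](y) →
    Cb⁻¹ * dist x y ^ (2 - n) ≤ G x y ∧ G x y ≤ Cb * dist x y ^ (2 - n)
  symm : ∀ x ∈ Ω, ∀ y ∈ Ω, G x y = G y x
  boundary : ∀ r : ℝ, 0 < r → ∃ Cr : ℝ, 0 < Cr ∧ ∀ x ∈ Ω, ∀ y ∈ Ω, r ≤ δ[Ω](y) →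
    δ[Ω](x) < r / 2 → G x y ≤ Cr * Φ x

theorem exists_forall_le_and_one_le_mul {Z : Type*} [TopologicalSpace Z] {s : Set Z}
    (hs : IsCompact s) {f : Z → ℝ} (hf : ContinuousOn f s) (hpos : ∀ x ∈ s, 0 < f x) :
    ∃ A > 0, ∀ x ∈ s, f x ≤ A ∧ 1 ≤ A * f x := by
  obtain ⟨A, hA⟩ := hs.exists_bound_of_continuousOn
    (hf.add (hf.inv₀ fun x hx ↦ (hpos x hx).ne'))
  refine ⟨max A 1, by positivity, fun x hx ↦ ?_⟩
  have hx0 := hpos x hx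
  have hsum : f x + (f x)⁻¹ ≤ max A 1 :=
    (le_abs_self _).trans ((hA x hx).trans (le_max_left A 1))
  have hinv : 0 < (f x)⁻¹ := inv_pos.2 hx0
  exact ⟨by linarith, (inv_le_iff_one_le_mul₀ hx0).1 (by linarith)⟩

theorem rpow_two_sub_eq_mul {d : ℝ} (hd : 0 < d) (n : ℝ) :
    d ^ (2 - n) = d * d ^ (-(n - 1)) := by
  rw [mul_comm, ← Real.rpow_add_one hd.ne']
  ring_nf

theorem ofReal_le_mul_edist_rpow_neg {x y : X} {t c q : ℝ} (hc : 0 < c) (hq : 0 < q)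
    (h : 0 < dist x y → t ≤ c * dist x y ^ (-q)) :
    ENNReal.ofReal t ≤ ENNReal.ofReal c * edist x y ^ (-q) := by
  rcases eq_or_ne x y with rfl | hxy
  · rw [edist_self, ENNReal.zero_rpow_of_neg (by linarith), ENNReal.mul_top (by simpa using hc)]
    exact le_top
  · have hd : 0 < dist x y := dist_pos.2 hxy
    rw [edist_dist, ENNReal.ofReal_rpow_of_pos hd, ← ENNReal.ofReal_mul hc.le]
    exact ENNReal.ofReal_le_ofReal (h hd)

namespace GreenEstimates

theorem near_div_mul_le (h : GreenEstimates Ω n α αs a c₀ β₁ Φ G) {x y : X} (hx : x ∈ Ω)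
    (hδ : δ[Ω](x) ∈ Ioo 0 β₁) (hy : y ∈ Ω) (hΦy : 0 ≤ Φ y) (hd : 0 < dist x y)
    (hxy : dist x y < a * δ[Ω](x)) :
    Φ x / δ[Ω](x) * G x y ≤ c₀ * a * Φ y * dist x y ^ (-(n - 1)) := by
  have hc₀ := h.one_le
  rw [div_mul_eq_mul_div, div_le_iff₀ hδ.1]
  calc Φ x * G x y ≤ c₀ * dist x y ^ (2 - n) * Φ y := (h.near _ hδ x hx rfl y hy hd hxy).2
    _ = c₀ * dist x y ^ (-(n - 1)) * Φ y * dist x y := by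
        rw [rpow_two_sub_eq_mul hd]; ring
    _ ≤ c₀ * dist x y ^ (-(n - 1)) * Φ y * (a * δ[Ω](x)) := by gcongr
    _ = c₀ * a * Φ y * dist x y ^ (-(n - 1)) * δ[Ω](x) := by ring

theorem far_div_mul_le (h : GreenEstimates Ω n α αs a c₀ β₁ Φ G) {x y : X} (hx : x ∈ Ω)
    (hδ : δ[Ω](x) ∈ Ioo 0 β₁) (hy : y ∈ Ω) (hxy : a * δ[Ω](x) ≤ dist x y) :
    Φ x / δ[Ω](x) * G x y ≤
      c₀ * Φ y * (δ[Ω](x) ^ (2 * αs - 1) * dist x y ^ (-(n - 2 + 2 * α))) := by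
  have hpow : δ[Ω](x) ^ (2 * αs) = δ[Ω](x) ^ (2 * αs - 1) * δ[Ω](x) := by
    rw [← Real.rpow_add_one hδ.1.ne', sub_add_cancel]
  rw [div_mul_eq_mul_div, div_le_iff₀ hδ.1]
  calc Φ x * G x y ≤ c₀ * δ[Ω](x) ^ (2 * αs) * dist x y ^ (2 - n - 2 * α) * Φ y :=
        h.far _ hδ x hx rfl y hy hxy
    _ = _ := by rw [hpow, show -(n - 2 + 2 * α) = 2 - n - 2 * α by ring]; ring

variable [ProperSpace X]

theorem exists_le_of_innerPart (h : GreenEstimates Ω n α αs a c₀ β₁ Φ G)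
    (hΩb : Bornology.IsBounded Ω) (hn : 1 ≤ n) (hΦc : ContinuousOn Φ Ω)
    (hΦpos : ∀ x ∈ Ω, 0 < Φ x) {b : ℝ} (hb : 0 < b) :
    ∃ C > 0, ∀ x ∈ innerPart Ω b, ∀ y ∈ Ω, 0 < dist x y →
      G x y ≤ C * Φ y * dist x y ^ (-(n - 1)) := by
  obtain ⟨Cr, hCr0, hCr⟩ := h.boundary b hb
  set D := diam Ω + 1
  have hD0 : 0 < D := by have := diam_nonneg (s := Ω); positivity
  obtain ⟨Cb, hCb1, hCb⟩ := h.interior (b / 2 / D) (by positivity)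
  obtain ⟨A, hA0, hA⟩ := exists_forall_le_and_one_le_mul
    (isCompact_innerPart hΩb (half_pos hb)) (hΦc.mono (sep_subset _ _)) fun x hx ↦ hΦpos x hx.1
  refine ⟨Cr * D ^ (n - 1) + Cb * D * A, by positivity, fun x hx y hy hd ↦ ?_⟩
  have hΦy := hΦpos y hy
  have hdD : dist x y ≤ D := (dist_le_diam_of_mem hΩb hx.1 hy).trans (by linarith)
  rcases lt_or_ge δ[Ω](y) (b / 2) with hyb | hyb
  · have hone : 1 ≤ D ^ (n - 1) * dist x y ^ (-(n - 1)) := by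
      rw [Real.rpow_neg hd.le, ← div_eq_mul_inv, one_le_div (by positivity)]
      exact Real.rpow_le_rpow hd.le hdD (by linarith)
    calc G x y = G y x := h.symm x hx.1 y hy
      _ ≤ Cr * Φ y := hCr y hy x hx.1 hx.2 hyb
      _ ≤ Cr * Φ y * (D ^ (n - 1) * dist x y ^ (-(n - 1))) :=
          le_mul_of_one_le_right (by positivity) hone
      _ = Cr * D ^ (n - 1) * Φ y * dist x y ^ (-(n - 1)) := by ring
      _ ≤ _ := by gcongr; exact le_add_of_nonneg_right (by positivity)
  · have hmin : dist x y ≤ (b / 2 / D)⁻¹ * min δ[Ω](x) δ[Ω](y) :=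
      calc dist x y ≤ (b / 2 / D)⁻¹ * (b / 2) := hdD.trans_eq (by field_simp)
        _ ≤ _ := by gcongr; exact le_min (by linarith [hx.2]) hyb
    calc G x y ≤ Cb * (dist x y * dist x y ^ (-(n - 1))) :=
          rpow_two_sub_eq_mul hd n ▸ (hCb x hx.1 y hy hd hmin).2
      _ ≤ Cb * (D * dist x y ^ (-(n - 1))) * (A * Φ y) :=
          (by gcongr : _ ≤ Cb * (D * dist x y ^ (-(n - 1)))).trans
            (le_mul_of_one_le_right (by positivity) (hA y ⟨hy, hyb⟩).2)
      _ = Cb * D * A * Φ y * dist x y ^ (-(n - 1)) := by ring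
      _ ≤ _ := by gcongr; exact le_add_of_nonneg_left (by positivity)

theorem exists_mul_rpow_le (h : GreenEstimates Ω n α αs a c₀ β₁ Φ G)
    (hΩb : Bornology.IsBounded Ω) (hΦc : ContinuousOn Φ Ω) (hΦpos : ∀ x ∈ Ω, 0 < Φ x) :
    ∃ C > 0, ∀ x ∈ Ω, ∀ y ∈ Ω, 0 < dist x y → dist x y < 2 * δ[Ω](x) → dist x y ≤ β₁ / 2 →
      Φ y * dist x y ^ (2 - n) ≤ C * (Φ x * G x y) := by
  have hβ₁ := h.pos
  have hc₀ := h.one_le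
  obtain ⟨A, hA0, hA⟩ := exists_forall_le_and_one_le_mul
    (isCompact_innerPart hΩb (half_pos hβ₁)) (hΦc.mono (sep_subset _ _)) fun x hx ↦ hΦpos x hx.1
  obtain ⟨C₁, hC₁, hint⟩ := h.interior 1 one_pos
  refine ⟨c₀ + A * A * C₁, by positivity, fun x hx y hy hd hxδ hxy ↦ ?_⟩
  have hΦx := hΦpos x hx
  have hΦy := hΦpos y hy
  rcases lt_or_ge δ[Ω](x) β₁ with hxβ | hxβ
  · have hnear : c₀⁻¹ * dist x y ^ (2 - n) * Φ y ≤ Φ x * G x y :=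
      (h.near _ ⟨by linarith, hxβ⟩ x hx rfl y hy hd (by nlinarith [h.two_le])).1
    have hG : 0 ≤ Φ x * G x y := le_trans (by positivity) hnear
    calc Φ y * dist x y ^ (2 - n) = c₀ * (c₀⁻¹ * dist x y ^ (2 - n) * Φ y) := by field_simp
      _ ≤ c₀ * (Φ x * G x y) := by gcongr
      _ ≤ _ := by gcongr; exact le_add_of_nonneg_right (by positivity)
  · have hyβ : β₁ / 2 ≤ δ[Ω](y) := by linarith [infDist_frontier_sub_le Ω x y]
    have hxβ' : β₁ / 2 ≤ δ[Ω](x) := by linarith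
    have hlow : C₁⁻¹ * dist x y ^ (2 - n) ≤ G x y :=
      (hint x hx y hy hd (by rw [inv_one, one_mul]; exact hxy.trans (le_min hxβ' hyβ))).1
    have hG : 0 ≤ G x y := le_trans (by positivity) hlow
    calc Φ y * dist x y ^ (2 - n) ≤ A * (A * Φ x) * dist x y ^ (2 - n) := by
          gcongr
          exact (hA y ⟨hy, hyβ⟩).1.trans (le_mul_of_one_le_right hA0.le (hA x ⟨hx, hxβ'⟩).2)
      _ = A * A * C₁ * Φ x * (C₁⁻¹ * dist x y ^ (2 - n)) := by field_simp
      _ ≤ A * A * C₁ * Φ x * G x y := by gcongr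
      _ = A * A * C₁ * (Φ x * G x y) := by ring
      _ ≤ _ := by gcongr; exact le_add_of_nonneg_left (by positivity)

end GreenEstimates

end Pointwise

section Domain

variable {E : Type*} [NormedAddCommGroup E] [InnerProductSpace ℝ E] [FiniteDimensional ℝ E]
  [Nontrivial E] {Ω : Set E}

theorem HasC1Boundary.exists_ball_subset (hΩ : HasC1Boundary Ω) (hΩo : IsOpen Ω)
    (hΩb : Bornology.IsBounded Ω) {R : ℝ} (hR : 0 < R) :
    ∃ s > 0, ∀ y ∈ Ω, ∃ z, ball z s ⊆ Ω ∧ ∀ x ∈ ball z s,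
      0 < dist x y ∧ dist x y < 2 * δ[Ω](x) ∧ dist x y ≤ R := by
  obtain ⟨r, hr, hball⟩ := hΩ.exists_le_infDist hΩo hΩb (κ := 3 / 4) (by norm_num) (by norm_num)
  set s := min r (R / 2)
  have hs0 : 0 < s := lt_min hr (by linarith)
  refine ⟨s / 8, by positivity, fun y hy ↦ ?_⟩
  obtain ⟨z, hz, hzy, hzδ⟩ := hball s ⟨hs0, min_le_left _ _⟩ y hy
  refine ⟨z, (ball_subset_ball (by linarith)).trans (ball_infDist_frontier_subset hz),
    fun x hx ↦ ?_⟩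
  rw [mem_ball'] at hx
  have hsR : s ≤ R / 2 := min_le_right _ _
  have hxδ := infDist_frontier_sub_le Ω z x
  have hupper := dist_triangle_left x y z
  have hlower := dist_triangle z x y
  exact ⟨by linarith, by linarith, by linarith⟩

variable {n α αs a c₀ β₁ : ℝ} {Φ : E → ℝ} {G : E → E → ℝ}

theorem GreenEstimates.exists_div_mul_le (h : GreenEstimates Ω n α αs a c₀ β₁ Φ G) (hΩo : IsOpen Ω)
    (hΩb : Bornology.IsBounded Ω) (hn : 1 ≤ n) (hΦc : ContinuousOn Φ Ω)
    (hΦpos : ∀ x ∈ Ω, 0 < Φ x) {b : ℝ} (hb : 0 < b) (hbβ : b ≤ β₁) :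
    ∃ C > 0, ∀ x ∈ Ω, ∀ y ∈ Ω, 0 < dist x y → (δ[Ω](x) < b → dist x y < a * δ[Ω](x)) →
      Φ x / δ[Ω](x) * G x y ≤ C * Φ y * dist x y ^ (-(n - 1)) := by
  have : ProperSpace E := FiniteDimensional.proper ℝ E
  obtain ⟨C, hC0, hC⟩ := h.exists_le_of_innerPart hΩb hn hΦc hΦpos hb
  obtain ⟨A, hA0, hA⟩ := exists_forall_le_and_one_le_mul
    (isCompact_innerPart hΩb hb) (hΦc.mono (sep_subset _ _)) fun x hx ↦ hΦpos x hx.1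
  have ha := h.two_le
  have hc₀ := h.one_le
  refine ⟨c₀ * a + A / b * C, by positivity, fun x hx y hy hd hxy ↦ ?_⟩
  have hΦy := hΦpos y hy
  rcases lt_or_ge δ[Ω](x) b with hxb | hxb
  · have hδ : δ[Ω](x) ∈ Ioo 0 β₁ := ⟨infDist_frontier_pos hΩo hΩb hx, hxb.trans_le hbβ⟩
    refine (h.near_div_mul_le hx hδ hy hΦy.le hd (hxy hxb)).trans ?_
    gcongr
    exact le_add_of_nonneg_right (by positivity)
  · have hΦx := hΦpos x hx
    calc Φ x / δ[Ω](x) * G x y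
        ≤ Φ x / δ[Ω](x) * (C * Φ y * dist x y ^ (-(n - 1))) := by
          gcongr
          · exact div_nonneg hΦx.le infDist_nonneg
          · exact hC x ⟨hx, hxb⟩ y hy hd
      _ ≤ A / b * (C * Φ y * dist x y ^ (-(n - 1))) := by gcongr; exact (hA x ⟨hx, hxb⟩).1
      _ = A / b * C * Φ y * dist x y ^ (-(n - 1)) := by ring
      _ ≤ _ := by gcongr; exact le_add_of_nonneg_left (by positivity)

theorem GreenEstimates.exists_ball_le_div_mul (h : GreenEstimates Ω n α αs a c₀ β₁ Φ G)
    (hΩ : HasC1Boundary Ω) (hΩo : IsOpen Ω) (hΩb : Bornology.IsBounded Ω) (hn : 2 ≤ n)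
    (hΦc : ContinuousOn Φ Ω) (hΦpos : ∀ x ∈ Ω, 0 < Φ x) :
    ∃ s > 0, ∃ C > 0, ∀ y ∈ Ω, ∃ z, ball z s ⊆ Ω ∧
      ∀ x ∈ ball z s, Φ y ≤ C * (Φ x / δ[Ω](x) * G x y) := by
  have : ProperSpace E := FiniteDimensional.proper ℝ E
  obtain ⟨C, hC0, hC⟩ := h.exists_mul_rpow_le hΩb hΦc hΦpos
  set R := β₁ / 2
  have hR : 0 < R := half_pos h.pos
  obtain ⟨s, hs0, hs⟩ := hΩ.exists_ball_subset hΩo hΩb hR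
  refine ⟨s, hs0, (R ^ (2 - n))⁻¹ * C * (diam Ω + 1),
    by have := diam_nonneg (s := Ω); positivity, fun y hy ↦ ?_⟩
  obtain ⟨z, hzΩ, hz⟩ := hs y hy
  refine ⟨z, hzΩ, fun x hx ↦ ?_⟩
  obtain ⟨hd, hdδ, hdR⟩ := hz x hx
  have hxΩ := hzΩ hx
  have hδ := infDist_frontier_pos hΩo hΩb hxΩ
  have hΦy := hΦpos y hy
  have hpt := hC x hxΩ y hy hd hdδ hdR
  have hΦG : 0 ≤ Φ x * G x y :=
    nonneg_of_mul_nonneg_right ((by positivity : 0 ≤ Φ y * dist x y ^ (2 - n)).trans hpt) hC0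
  have hdiv : Φ x * G x y ≤ (diam Ω + 1) * (Φ x / δ[Ω](x) * G x y) := by
    rw [div_mul_eq_mul_div, mul_div_assoc', le_div_iff₀ hδ, mul_comm]
    gcongr
    linarith [infDist_frontier_le_diam hΩb hxΩ]
  calc Φ y = (R ^ (2 - n))⁻¹ * (Φ y * R ^ (2 - n)) := by field_simp
    _ ≤ (R ^ (2 - n))⁻¹ * (Φ y * dist x y ^ (2 - n)) := by
        gcongr (R ^ (2 - n))⁻¹ * (Φ y * ?_)
        exact Real.rpow_le_rpow_of_nonpos hd hdR (by linarith)
    _ ≤ (R ^ (2 - n))⁻¹ * (C * ((diam Ω + 1) * (Φ x / δ[Ω](x) * G x y))) := by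
        gcongr (R ^ (2 - n))⁻¹ * ?_
        exact hpt.trans (mul_le_mul_of_nonneg_left hdiv hC0.le)
    _ = _ := by ring

variable [MeasurableSpace E] [BorelSpace E] (μ : Measure E) [μ.IsAddHaarMeasure]

theorem GreenEstimates.exists_le_setLIntegral
    (h : GreenEstimates Ω n α αs a c₀ β₁ Φ G)
    (hΩ : HasC1Boundary Ω) (hΩo : IsOpen Ω) (hΩb : Bornology.IsBounded Ω) (hn : 2 ≤ n)
    (hΦc : ContinuousOn Φ Ω) (hΦpos : ∀ x ∈ Ω, 0 < Φ x) :
    ∃ C : ℝ≥0, ∀ y ∈ Ω, ENNReal.ofReal (Φ y) ≤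
      C * ∫⁻ x in Ω, ENNReal.ofReal (Φ x / δ[Ω](x) * G x y) ∂μ := by
  obtain ⟨s, hs, k, hk, hball⟩ := h.exists_ball_le_div_mul hΩ hΩo hΩb hn hΦc hΦpos
  set V := μ (ball 0 s) with hV
  have hV0 : V ≠ 0 := (measure_ball_pos μ 0 hs).ne'
  have hVt : V ≠ ⊤ := measure_ball_lt_top.ne
  have hCt : V⁻¹ * ENNReal.ofReal k ≠ ⊤ := by finiteness
  refine ⟨(V⁻¹ * ENNReal.ofReal k).toNNReal, fun y hy ↦ ?_⟩
  rw [ENNReal.coe_toNNReal hCt, mul_assoc, ← ENNReal.mul_le_iff_le_inv hV0 hVt]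
  obtain ⟨z, hzΩ, hz⟩ := hball y hy
  calc V * ENNReal.ofReal (Φ y) = ∫⁻ _ in ball z s, ENNReal.ofReal (Φ y) ∂μ := by
        rw [setLIntegral_const, hV, Measure.addHaar_ball_center μ z, mul_comm]
    _ ≤ ∫⁻ x in ball z s, ENNReal.ofReal k * ENNReal.ofReal (Φ x / δ[Ω](x) * G x y) ∂μ := by
        refine setLIntegral_mono' measurableSet_ball fun x hx ↦ ?_
        rw [← ENNReal.ofReal_mul hk.le]
        exact ENNReal.ofReal_le_ofReal (hz x hx)
    _ = ENNReal.ofReal k * ∫⁻ x in ball z s, ENNReal.ofReal (Φ x / δ[Ω](x) * G x y) ∂μ :=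
        lintegral_const_mul' _ _ ENNReal.ofReal_ne_top
    _ ≤ _ := by gcongr

theorem GreenEstimates.exists_setLIntegral_near_le (h : GreenEstimates Ω n α αs a c₀ β₁ Φ G)
    (hΩo : IsOpen Ω) (hΩb : Bornology.IsBounded Ω) (hn : 1 < n) (hnE : n < finrank ℝ E + 1)
    (hΦc : ContinuousOn Φ Ω) (hΦpos : ∀ x ∈ Ω, 0 < Φ x) {b : ℝ} (hb : 0 < b) (hbβ : b ≤ β₁) :
    ∃ C : ℝ≥0, ∀ y ∈ Ω,
      ∫⁻ x in Ω \ (collar Ω b ∩ {x | a * δ[Ω](x) ≤ dist x y}),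
        ENNReal.ofReal (Φ x / δ[Ω](x) * G x y) ∂μ ≤ C * ENNReal.ofReal (Φ y) := by
  obtain ⟨k, hk, hpt⟩ := h.exists_div_mul_le hΩo hΩb hn.le hΦc hΦpos hb hbβ
  obtain ⟨M, hM⟩ := exists_setLIntegral_edist_rpow_neg_le μ (q := n - 1) (by linarith)
    (by linarith) hΩb.measure_lt_top.ne
  refine ⟨k.toNNReal * M, fun y hy ↦ ?_⟩
  have hΦy := hΦpos y hy
  set F := collar Ω b ∩ {x | a * δ[Ω](x) ≤ dist x y}
  have hF : MeasurableSet (Ω \ F) := hΩo.measurableSet.diff <|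
    (isOpen_collar hΩo).measurableSet.inter <|
      (isClosed_le ((continuous_infDist_pt _).const_mul a) (by fun_prop)).measurableSet
  calc ∫⁻ x in Ω \ F, ENNReal.ofReal (Φ x / δ[Ω](x) * G x y) ∂μ
      ≤ ∫⁻ x in Ω \ F, ENNReal.ofReal (k * Φ y) * edist x y ^ (-(n - 1)) ∂μ := by
        refine setLIntegral_mono' hF fun x hx ↦ ofReal_le_mul_edist_rpow_neg (by positivity)
          (by linarith) fun hd ↦ hpt x hx.1 y hy hd fun hxb ↦ ?_
        exact lt_of_not_ge fun hle ↦ hx.2 ⟨⟨hx.1, hxb⟩, hle⟩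
    _ = ENNReal.ofReal (k * Φ y) * ∫⁻ x in Ω \ F, edist x y ^ (-(n - 1)) ∂μ :=
        lintegral_const_mul' _ _ ENNReal.ofReal_ne_top
    _ ≤ ENNReal.ofReal (k * Φ y) * M := by
        gcongr
        exact (lintegral_mono_set sdiff_subset).trans (hM y)
    _ = _ := by
        rw [ENNReal.ofReal_mul hk.le, ENNReal.coe_mul, mul_right_comm]
        rfl

theorem GreenEstimates.exists_setLIntegral_far_le (h : GreenEstimates Ω n α αs a c₀ β₁ Φ G)
    (hΩ : HasC1Boundary Ω) (hΩo : IsOpen Ω) (hΩb : Bornology.IsBounded Ω)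
    (hdim : 1 < finrank ℝ E) (hα : 0 ≤ n - 2 + 2 * α) (hαs : 0 < αs)
    (hααs : n - 1 + 2 * α < finrank ℝ E + 2 * αs) (hΦpos : ∀ x ∈ Ω, 0 < Φ x) :
    ∃ b > 0, b ≤ β₁ ∧ ∃ C : ℝ≥0, ∀ y ∈ Ω,
      ∫⁻ x in collar Ω b ∩ {x | a * δ[Ω](x) ≤ dist x y},
        ENNReal.ofReal (Φ x / δ[Ω](x) * G x y) ∂μ ≤ C * ENNReal.ofReal (Φ y) := by
  obtain ⟨b₀, hb₀, M, hM⟩ := hΩ.exists_setLIntegral_infDist_rpow_mul_le μ hΩo hΩb hdim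
    (σ := 2 * αs - 1) (q := n - 2 + 2 * α) (by linarith) hα (by linarith)
  have ha := h.two_le
  have hc₀ : 0 ≤ c₀ := by linarith [h.one_le]
  refine ⟨min b₀ β₁, lt_min hb₀ h.pos, min_le_right _ _, c₀.toNNReal * M, fun y hy ↦ ?_⟩
  set F := collar Ω (min b₀ β₁) ∩ {x | a * δ[Ω](x) ≤ dist x y}
  have hF : MeasurableSet F := (isOpen_collar hΩo).measurableSet.inter
    (isClosed_le ((continuous_infDist_pt _).const_mul a) (by fun_prop)).measurableSet
  have hpt : ∀ x ∈ F, ENNReal.ofReal (Φ x / δ[Ω](x) * G x y) ≤ ENNReal.ofReal (c₀ * Φ y) *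
      (ENNReal.ofReal δ[Ω](x) ^ (2 * αs - 1) * edist x y ^ (-(n - 2 + 2 * α))) := by
    rintro x ⟨⟨hx, hxb⟩, hxy⟩
    have hδ := infDist_frontier_pos hΩo hΩb hx
    have hd : 0 < dist x y := lt_of_lt_of_le (by positivity) hxy
    rw [edist_dist, ENNReal.ofReal_rpow_of_pos hδ, ENNReal.ofReal_rpow_of_pos hd,
      ← ENNReal.ofReal_mul (by positivity),
      ← ENNReal.ofReal_mul (mul_nonneg hc₀ (hΦpos y hy).le)]
    exact ENNReal.ofReal_le_ofReal
      (h.far_div_mul_le hx ⟨hδ, hxb.trans_le (min_le_right _ _)⟩ hy hxy)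
  have hFsub : F ⊆ collar Ω b₀ ∩ {x | δ[Ω](x) ≤ dist x y} := fun x hx ↦
    ⟨collar_mono (min_le_left _ _) hx.1,
      (le_mul_of_one_le_left infDist_nonneg (by linarith)).trans hx.2⟩
  calc ∫⁻ x in F, ENNReal.ofReal (Φ x / δ[Ω](x) * G x y) ∂μ
      ≤ ENNReal.ofReal (c₀ * Φ y) * ∫⁻ x in F,
          ENNReal.ofReal δ[Ω](x) ^ (2 * αs - 1) * edist x y ^ (-(n - 2 + 2 * α)) ∂μ :=
        (setLIntegral_mono' hF hpt).trans_eq (lintegral_const_mul' _ _ ENNReal.ofReal_ne_top)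
    _ ≤ ENNReal.ofReal (c₀ * Φ y) * M := by
        gcongr
        exact (lintegral_mono_set hFsub).trans (hM y)
    _ = _ := by
        rw [ENNReal.ofReal_mul hc₀, ENNReal.coe_mul, mul_right_comm]
        rfl

theorem GreenEstimates.exists_comparableUpTo_setLIntegral
    (h : GreenEstimates Ω (finrank ℝ E) α αs a c₀ β₁ Φ G) (hΩ : HasC1Boundary Ω)
    (hΩo : IsOpen Ω) (hΩb : Bornology.IsBounded Ω) (hdim : 1 < finrank ℝ E) (hα : 0 ≤ α)
    (hαs : 0 < αs) (hααs : α - 1 / 2 < αs) (hΦc : ContinuousOn Φ Ω)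
    (hΦpos : ∀ x ∈ Ω, 0 < Φ x) :
    ∃ C : ℝ≥0, ∀ y ∈ Ω, ComparableUpTo C
      (∫⁻ x in Ω, ENNReal.ofReal (Φ x / δ[Ω](x) * G x y) ∂μ) (ENNReal.ofReal (Φ y)) := by
  have hdim' : (2 : ℝ) ≤ finrank ℝ E := by exact_mod_cast hdim
  obtain ⟨b, hb, hbβ, C₁, hfar⟩ := h.exists_setLIntegral_far_le μ hΩ hΩo hΩb hdim
    (by linarith) hαs (by linarith) hΦpos
  obtain ⟨C₂, hnear⟩ := h.exists_setLIntegral_near_le μ hΩo hΩb (by linarith) (by linarith)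
    hΦc hΦpos hb hbβ
  obtain ⟨C₃, hlower⟩ := h.exists_le_setLIntegral μ hΩ hΩo hΩb hdim' hΦc hΦpos
  refine ⟨C₁ + C₂ + C₃, fun y hy ↦ ⟨?_, (hlower y hy).trans (by gcongr; exact le_add_self)⟩⟩
  set F := collar Ω b ∩ {x | a * δ[Ω](x) ≤ dist x y}
  have hFΩ : F ⊆ Ω := fun x hx ↦ hx.1.1
  calc ∫⁻ x in Ω, ENNReal.ofReal (Φ x / δ[Ω](x) * G x y) ∂μ
      ≤ ∫⁻ x in F, ENNReal.ofReal (Φ x / δ[Ω](x) * G x y) ∂μ +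
          ∫⁻ x in Ω \ F, ENNReal.ofReal (Φ x / δ[Ω](x) * G x y) ∂μ :=
        (lintegral_mono_set (union_sdiff_cancel hFΩ).superset).trans (lintegral_union_le _ _ _)
    _ ≤ C₁ * ENNReal.ofReal (Φ y) + C₂ * ENNReal.ofReal (Φ y) :=
        add_le_add (hfar y hy) (hnear y hy)
    _ = ↑(C₁ + C₂) * ENNReal.ofReal (Φ y) := by push_cast; rw [add_mul]
    _ ≤ _ := mul_le_mul_left (ENNReal.coe_le_coe.2 le_self_add) _

end Domain

end GreenKernel

section Superharmonic

theorem setLIntegral_ofReal_mul {X : Type*} [MeasurableSpace X] {μ : Measure X} {s : Set X}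
    (hs : MeasurableSet s) {w g : X → ℝ} (hw : ∀ x ∈ s, 0 ≤ w x) :
    ∫⁻ x in s, ENNReal.ofReal (w x * g x) ∂μ =
      ∫⁻ x in s, ENNReal.ofReal (w x) * ENNReal.ofReal (g x) ∂μ :=
  setLIntegral_congr_fun hs fun x hx ↦ ENNReal.ofReal_mul (hw x hx)

variable {E : Type*} [NormedAddCommGroup E] [InnerProductSpace ℝ E] [FiniteDimensional ℝ E]
  [MeasurableSpace E] [BorelSpace E] (μ : Measure E) [μ.IsAddHaarMeasure] {Ω : Set E}

theorem HasC1Boundary.exists_comparableUpTo_setLIntegral_mul_one [Nontrivial E]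
    (hΩ : HasC1Boundary Ω) (hΩo : IsOpen Ω) (hΩb : Bornology.IsBounded Ω) {Y : Type*}
    [TopologicalSpace Y] {P : Set Y} (hP : IsCompact P) {w W : E → ℝ} {k : E → Y → ℝ}
    (hw : ContinuousOn w Ω) (hw0 : ∀ x ∈ Ω, 0 ≤ w x) (hW0 : ∀ x ∈ Ω, 0 ≤ W x)
    (hk : ContinuousOn (Function.uncurry k) (Ω ×ˢ P)) {c C : ℝ≥0} {ε : ℝ} (hε : 0 < ε)
    (hWw : ∀ x ∈ Ω, ComparableUpTo c (ENNReal.ofReal (W x)) (ENNReal.ofReal (w x)))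
    (hslice : ∀ y ∈ P, ∀ β ∈ Ioo 0 ε, ComparableUpTo C
      (∫⁻ x in parallelSurface Ω β, ENNReal.ofReal (W x * k x y)
        ∂μH[(finrank ℝ E : ℝ) - 1]) 1) :
    ∃ C' : ℝ≥0, ∀ y ∈ P,
      ComparableUpTo C' (∫⁻ x in Ω, ENNReal.ofReal (w x) * ENNReal.ofReal (k x y) ∂μ) 1 := by
  obtain ⟨C', hC'⟩ := hΩ.exists_comparableUpTo_setLIntegral_one μ hΩo hΩb hP
    (k := fun x y ↦ w x * k x y) ((hw.comp continuousOn_fst fun z hz ↦ hz.1).mul hk) hε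
    (C := c * C) fun y hy β hβ ↦
      (ComparableUpTo.setLIntegral (measurableSet_parallelSurface hΩo β) fun x hx ↦ by
        rw [ENNReal.ofReal_mul (hw0 x hx.1), ENNReal.ofReal_mul (hW0 x hx.1)]
        exact (hWw x hx.1).symm.mul_right _).trans (hslice y hy β hβ)
  refine ⟨C', fun y hy ↦ ?_⟩
  rw [← setLIntegral_ofReal_mul hΩo.measurableSet hw0]
  exact hC' y hy

theorem stmt6_general {N : ℕ} (hdim : finrank ℝ E = N) (hN : 1 < N) (hΩ : HasC1Boundary Ω)
    (hΩo : IsOpen Ω) (hΩb : Bornology.IsBounded Ω) {α αs a c₀ β₁ : ℝ} {Φ Φ₀ : E → ℝ}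
    {G K : E → E → ℝ}
    (hG : GreenEstimates Ω N α αs a c₀ β₁ Φ G)
    (hGm : Measurable (Function.uncurry G)) (hα : 0 ≤ α) (hαs : 0 < αs) (hααs : α - 1 / 2 < αs)
    (hΦc : ContinuousOn Φ Ω) (hΦpos : ∀ x ∈ Ω, 0 < Φ x) {cs : ℝ} (hcs : 0 < cs)
    (hΦ₀ : ∀ x ∈ Ω, cs⁻¹ * δ[Ω](x) ≤ Φ₀ x ∧ Φ₀ x ≤ cs * δ[Ω](x))
    (hKc : ContinuousOn (Function.uncurry K) (Ω ×ˢ frontier Ω)) {C₀ : ℝ≥0} {ε : ℝ} (hε : 0 < ε)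
    (hK : ∀ y ∈ frontier Ω, ∀ β ∈ Ioo 0 ε, ComparableUpTo C₀
      (∫⁻ x in parallelSurface Ω β, ENNReal.ofReal (Φ x / Φ₀ x * K x y)
        ∂μH[(N : ℝ) - 1]) 1) :
    ∃ C : ℝ≥0, ∀ (τ ν : Measure E) [SFinite ν], ∫⁻ x in Ω, ENNReal.ofReal (Φ x) ∂τ < ⊤ →
      ∀ u : E → ℝ≥0∞, (∀ x ∈ Ω, u x = ∫⁻ y in Ω, ENNReal.ofReal (G x y) ∂τ +
        ∫⁻ y in frontier Ω, ENNReal.ofReal (K x y) ∂ν) →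
      ComparableUpTo C (∫⁻ x in Ω, ENNReal.ofReal (Φ x / Φ₀ x) * u x ∂μ)
        (∫⁻ x in Ω, ENNReal.ofReal (Φ x) ∂τ + ν (frontier Ω)) := by
  subst hdim
  have : Nontrivial E := Module.nontrivial_of_finrank_pos (R := ℝ) (by lia)
  have : ProperSpace E := FiniteDimensional.proper ℝ E
  have hΩm := hΩo.measurableSet
  have hfm : MeasurableSet (frontier Ω) := isClosed_frontier.measurableSet
  have hδ : ∀ x ∈ Ω, 0 < δ[Ω](x) := fun x hx ↦ infDist_frontier_pos hΩo hΩb hx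
  have hw : ContinuousOn (fun x ↦ Φ x / δ[Ω](x)) Ω :=
    hΦc.div (continuous_infDist_pt _).continuousOn fun x hx ↦ (hδ x hx).ne'
  have hw0 : ∀ x ∈ Ω, 0 ≤ Φ x / δ[Ω](x) := fun x hx ↦ (div_pos (hΦpos x hx) (hδ x hx)).le
  have hΦ₀pos : ∀ x ∈ Ω, 0 < Φ₀ x := fun x hx ↦
    (mul_pos (inv_pos.2 hcs) (hδ x hx)).trans_le (hΦ₀ x hx).1
  have hW x (hx : x ∈ Ω) := ComparableUpTo.ofReal_div hcs (hδ x hx) (hΦpos x hx).le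
    (hΦ₀ x hx).1 (hΦ₀ x hx).2
  obtain ⟨C₁, hC₁⟩ := hG.exists_comparableUpTo_setLIntegral μ hΩ hΩo hΩb hN hα hαs hααs hΦc hΦpos
  obtain ⟨C₂, hC₂⟩ := hΩ.exists_comparableUpTo_setLIntegral_mul_one μ hΩo hΩb
    (isCompact_frontier_of_isBounded hΩb) hw hw0
    (fun x hx ↦ (div_pos (hΦpos x hx) (hΦ₀pos x hx)).le) hKc hε hW hK
  simp only [setLIntegral_ofReal_mul hΩm hw0] at hC₁
  refine ⟨cs.toNNReal * max C₁ C₂, fun τ ν _ hτ u hu ↦ ?_⟩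
  have : SFinite (τ.restrict Ω) :=
    sFinite_restrict_of_setLIntegral_ofReal_ne_top hΩm (hΦc.aemeasurable hΩm) hΦpos hτ.ne
  have hKm : AEMeasurable (Function.uncurry fun x y ↦ ENNReal.ofReal (K x y))
      ((μ.restrict Ω).prod (ν.restrict (frontier Ω))) := by
    rw [Measure.prod_restrict]
    exact (hKc.aemeasurable (hΩm.prod hfm)).ennreal_ofReal
  rw [← one_mul (ν _), ← setLIntegral_const]
  refine (ComparableUpTo.setLIntegral hΩm fun x hx ↦ ?_).trans
    (ComparableUpTo.lintegral_mul_add_lintegral (hw.aemeasurable hΩm).ennreal_ofReal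
      (fun _ ↦ ENNReal.ofReal_ne_top) hGm.ennreal_ofReal.aemeasurable hKm
      ((ae_restrict_iff' hΩm).2 (.of_forall hC₁)) ((ae_restrict_iff' hfm).2 (.of_forall hC₂)))
  rw [hu x hx]
  exact (hW x hx).mul_right _

end Superharmonic

theorem stmt6 {N : ℕ} (hN : 3 ≤ N) (Ω : Set (EuclideanSpace ℝ (Fin N)))
    (hΩo : IsOpen Ω) (hΩb : Bornology.IsBounded Ω) (hΩ2 : HasC2Boundary Ω)
    (α αs : ℝ) (hα : 0 < α - 1/2) (hαs : α - 1/2 < αs) (hαs' : αs ≤ α)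
    (Φ Φ₀ : EuclideanSpace ℝ (Fin N) → ℝ)
    (G : EuclideanSpace ℝ (Fin N) → EuclideanSpace ℝ (Fin N) → ℝ)
    (K : EuclideanSpace ℝ (Fin N) → EuclideanSpace ℝ (Fin N) → ℝ)
    (hGm : Measurable (Function.uncurry G))
    (hGpos : ∀ x ∈ Ω, ∀ y ∈ Ω, x ≠ y → 0 < G x y)
    (a c₀ β₁ : ℝ) (ha : 2 ≤ a) (hc₀ : 1 ≤ c₀) (hβ₁ : 0 < β₁)
    -- (H1): two-sided boundary Green estimate near the diagonal
    (hG1 : ∀ β ∈ Set.Ioo (0:ℝ) β₁, ∀ x ∈ Ω, Metric.infDist x (frontier Ω) = β →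
      ∀ y ∈ Ω, 0 < dist x y → dist x y < a * β →
        c₀⁻¹ * dist x y ^ ((2:ℝ) - N) * Φ y ≤ Φ x * G x y ∧
        Φ x * G x y ≤ c₀ * dist x y ^ ((2:ℝ) - N) * Φ y)
    -- (H2): upper boundary Green estimate away from the diagonal
    (hG2 : ∀ β ∈ Set.Ioo (0:ℝ) β₁, ∀ x ∈ Ω, Metric.infDist x (frontier Ω) = β →
      ∀ y ∈ Ω, a * β ≤ dist x y →
        Φ x * G x y ≤ c₀ * β ^ (2 * αs) * dist x y ^ ((2:ℝ) - N - 2 * α) * Φ y)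
    -- (H3): two-sided interior Green estimate
    (hG3 : ∀ b : ℝ, 0 < b → ∃ Cb : ℝ, 1 ≤ Cb ∧ ∀ x ∈ Ω, ∀ y ∈ Ω,
      0 < dist x y →
      dist x y ≤ b⁻¹ * min (Metric.infDist x (frontier Ω)) (Metric.infDist y (frontier Ω)) →
      Cb⁻¹ * dist x y ^ ((2:ℝ) - N) ≤ G x y ∧ G x y ≤ Cb * dist x y ^ ((2:ℝ) - N))
    -- (H4): symmetry and comparison with the ground state near the boundary
    (hGsym : ∀ x ∈ Ω, ∀ y ∈ Ω, G x y = G y x)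
    (hG4 : ∀ r : ℝ, 0 < r → ∃ Cr : ℝ, 0 < Cr ∧ ∀ x ∈ Ω, ∀ y ∈ Ω,
      r ≤ Metric.infDist y (frontier Ω) → Metric.infDist x (frontier Ω) < r / 2 →
      G x y ≤ Cr * Φ x)
    -- (H5): condition (B2) on the ground state
    (hΦc : ContinuousOn Φ Ω) (hΦpos : ∀ x ∈ Ω, 0 < Φ x)
    (c₁ : ℝ) (hc₁ : 1 ≤ c₁)
    (hΦ : ∀ x ∈ Ω, Metric.infDist x (frontier Ω) < β₁ →
      c₁⁻¹ * Metric.infDist x (frontier Ω) ^ α ≤ Φ x ∧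
      Φ x ≤ c₁ * Metric.infDist x (frontier Ω) ^ αs)
    -- (H6): `Φ₀ ∼ δ`
    (cs : ℝ) (hcs : 1 ≤ cs)
    (hΦ₀ : ∀ x ∈ Ω, cs⁻¹ * Metric.infDist x (frontier Ω) ≤ Φ₀ x ∧
      Φ₀ x ≤ cs * Metric.infDist x (frontier Ω))
    (hΦ₀pos : ∀ x ∈ Ω, 0 < Φ₀ x)
    -- (H7): Martin kernel bound
    (hKc : ContinuousOn (Function.uncurry K) (Ω ×ˢ frontier Ω))
    (hKpos : ∀ x ∈ Ω, ∀ y ∈ frontier Ω, 0 < K x y)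
    (C₀ ε : ℝ) (hC₀ : 1 ≤ C₀) (hε : 0 < ε)
    (hKbound : ∀ y ∈ frontier Ω, ∀ β ∈ Set.Ioo (0:ℝ) ε,
      ENNReal.ofReal C₀⁻¹ ≤
        (∫⁻ x in {x ∈ Ω | Metric.infDist x (frontier Ω) = β},
          ENNReal.ofReal (Φ x / Φ₀ x * K x y) ∂(μH[(N:ℝ) - 1])) ∧
      (∫⁻ x in {x ∈ Ω | Metric.infDist x (frontier Ω) = β},
          ENNReal.ofReal (Φ x / Φ₀ x * K x y) ∂(μH[(N:ℝ) - 1])) ≤ ENNReal.ofReal C₀) :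
    -- conclusion: two-sided weighted estimate of `u = G[τ] + K[ν]`
    ∃ C : ℝ, 1 ≤ C ∧
      ∀ (τ ν : Measure (EuclideanSpace ℝ (Fin N))), τ Ωᶜ = 0 →
        (∫⁻ x in Ω, ENNReal.ofReal (Φ x) ∂τ) < ⊤ →
        IsFiniteMeasure ν → ν (frontier Ω)ᶜ = 0 →
        ∀ u : EuclideanSpace ℝ (Fin N) → ℝ≥0∞,
          (∀ x ∈ Ω, u x = (∫⁻ y in Ω, ENNReal.ofReal (G x y) ∂τ) +
            (∫⁻ y in frontier Ω, ENNReal.ofReal (K x y) ∂ν)) →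
          ENNReal.ofReal C⁻¹ *
              ((∫⁻ x in Ω, ENNReal.ofReal (Φ x) ∂τ) + ν (frontier Ω)) ≤
            (∫⁻ x in Ω, ENNReal.ofReal (Φ x / Φ₀ x) * u x ∂volume) ∧
          (∫⁻ x in Ω, ENNReal.ofReal (Φ x / Φ₀ x) * u x ∂volume) ≤
            ENNReal.ofReal C *
              ((∫⁻ x in Ω, ENNReal.ofReal (Φ x) ∂τ) + ν (frontier Ω)) := by
  obtain ⟨C, hC⟩ := stmt6_general volume finrank_euclideanSpace_fin (by lia) hΩ2.hasC1Boundary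
    hΩo hΩb ⟨ha, hc₀, hβ₁, hG1, hG2, hG3, hGsym, hG4⟩ hGm (by linarith) (by linarith) hαs
    hΦc hΦpos (by linarith) hΦ₀ hKc hε fun y hy β hβ ↦
      .one_right_of_bounds (by linarith) (hKbound y hy β hβ).1 (hKbound y hy β hβ).2
  exact ⟨max 1 C, by simp, fun τ ν _ hτ _ _ u hu ↦ (hC τ ν hτ u hu).ofReal_bounds⟩
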